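/- arXiv:1305.4719 — 3 statements merged into one kernel-verified Lean document; each statement's English description precedes it below -/
import Mathlib

section
/- Negligibility of the correlation term B₂₁ (display (AsyJ22)): define, for t > 0, B₂₁(t) := ∫₀^∞ E[(exp(−t^{1/Y}·(M*·U + G*·V)) − 1)·1_{U − V ≤ −t^{1/2−1/Y}·w}]·((1 − e^{−√t·w})/√t)·(e^{−w²/(2σ²)}/√(2πσ²)) dw. Then lim_{t→0⁺} t^{−1/2}·B₂₁(t) = 0. -/
open MeasureTheory ProbabilityTheory Filter Topology Set

/-!
The characteristic function `exp (κ (-iz) ^ Y)` extends holomorphically to the upper half-plane and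
is bounded on every strip `0 ≤ im z ≤ s`, so shifting the contour in a Gaussian-damped Fourier
inversion bounds `E exp (-s U)`; hence `U` and `V` have all left exponential moments. They have a
first moment because `1 - E exp (iuU) = O(|u| ^ Y)` with `1 < Y`. Therefore `Z = M* U + G* V` and
`exp (-Z) ≤ exp (-2 M* U) + exp (-2 G* V)` are integrable, and for `h = t ^ (1 / Y) ≤ 1` convexity
gives `|exp (-h Z) - 1| ≤ h (|Z| + exp (-Z))`. Since `0 ≤ (1 - exp (-√t w)) / √t ≤ w`,
and `w` is integrable against the Gaussian density, `B₂₁ t = O(t ^ (1 / Y))`, where `1 / Y > 1 / 2`.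
-/

section ContourShift

variable {f : ℂ → ℂ} {s : ℝ}

lemma rectangle_integral_eq_zero (hs : 0 ≤ s)
    (hc : ContinuousOn f (Complex.im ⁻¹' Icc 0 s))
    (hd : DifferentiableOn ℂ f (Complex.im ⁻¹' Ioo 0 s)) (T : ℝ) :
    (∫ x in -T..T, f x) - (∫ x in -T..T, f (x + s * Complex.I))
      + Complex.I * (∫ y in (0 : ℝ)..s, f (T + y * Complex.I))
      - Complex.I * (∫ y in (0 : ℝ)..s, f ((-T : ℝ) + y * Complex.I)) = 0 := by
  have h := Complex.integral_boundary_rect_eq_zero_of_continuousOn_of_differentiableOn f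
    (-T : ℝ) (T + s * Complex.I) (hc.mono fun z hz => ?_) (hd.mono fun z hz => ?_)
  · simpa using h
  · simpa [uIcc_of_le hs] using hz.2
  · simpa [hs] using hz.2

theorem integral_add_mul_I_eq_integral_of_norm_le {g : ℝ → ℝ} (hs : 0 ≤ s)
    (hc : ContinuousOn f (Complex.im ⁻¹' Icc 0 s))
    (hd : DifferentiableOn ℂ f (Complex.im ⁻¹' Ioo 0 s))
    (hfg : ∀ z, z.im ∈ Icc 0 s → ‖f z‖ ≤ g z.re)
    (hg : Integrable g) (hg₀ : Tendsto g (cocompact ℝ) (𝓝 0)) :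
    ∫ x : ℝ, f (x + s * Complex.I) = ∫ x : ℝ, f x := by
  have integrable_line {y : ℝ} (hy : y ∈ Icc 0 s) :
      Integrable fun x : ℝ => f (x + y * Complex.I) := by
    have hcont : Continuous fun x : ℝ => f (x + y * Complex.I) :=
      hc.comp_continuous (by fun_prop) fun x => by simpa using hy
    exact hg.mono' hcont.aestronglyMeasurable
      (ae_of_all _ fun x => by simpa using hfg (x + y * Complex.I) (by simpa using hy))
  have horizontal {y : ℝ} (hy : y ∈ Icc 0 s) :
      Tendsto (fun T : ℝ => ∫ x in -T..T, f (x + y * Complex.I)) atTop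
        (𝓝 (∫ x : ℝ, f (x + y * Complex.I))) :=
    intervalIntegral_tendsto_integral (integrable_line hy) tendsto_neg_atTop_atBot tendsto_id
  have vertical {a : ℝ → ℝ} (ha : Tendsto a atTop (cocompact ℝ)) :
      Tendsto (fun T => Complex.I * ∫ y in (0 : ℝ)..s, f (a T + y * Complex.I)) atTop (𝓝 0) := by
    refine squeeze_zero_norm (a := fun T => g (a T) * |s - 0|) (fun T => ?_) ?_
    · rw [norm_mul, Complex.norm_I, one_mul]
      refine intervalIntegral.norm_integral_le_of_norm_le_const fun y hy => ?_
      rw [uIoc_of_le hs] at hy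
      simpa using hfg (a T + y * Complex.I) (by simpa using Ioc_subset_Icc_self hy)
    · simpa using (hg₀.comp ha).mul_const |s - 0|
  have hlim := (((horizontal (left_mem_Icc.2 hs)).sub (horizontal (right_mem_Icc.2 hs))).add
    (vertical (tendsto_id.mono_right atTop_le_cocompact))).sub
    (vertical (tendsto_neg_atTop_atBot.mono_right atBot_le_cocompact))
  have hzero := tendsto_nhds_unique hlim (tendsto_const_nhds.congr fun T => by
    simpa using (rectangle_integral_eq_zero hs hc hd T).symm)
  have hsub : (∫ x : ℝ, f x) - ∫ x : ℝ, f (x + s * Complex.I) = 0 := by simpa using hzero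
  exact (sub_eq_zero.1 hsub).symm

end ContourShift

section ExponentialMoment

variable {μ : Measure ℝ} {b : ℝ}

lemma norm_cexp_neg_mul_sub_mul_I_sq (b s : ℝ) (z : ℂ) :
    ‖Complex.exp (-b * (z - s * Complex.I) ^ 2)‖
      = Real.exp (b * (z.im - s) ^ 2) * Real.exp (-b * z.re ^ 2) := by
  rw [Complex.norm_exp, ← Real.exp_add]
  congr 1
  simp only [pow_two, Complex.mul_re, Complex.neg_re, Complex.neg_im, Complex.sub_re,
    Complex.sub_im, Complex.mul_im, Complex.ofReal_re, Complex.ofReal_im, Complex.I_re,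
    Complex.I_im]
  ring

lemma integral_cexp_neg_mul_sub_sq_eq_integral_charFun [IsFiniteMeasure μ] (hb : 0 < b) (s : ℝ) :
    (Real.pi / b : ℂ) ^ (1 / 2 : ℂ) * ∫ x, (Real.exp (-(s * x) - x ^ 2 / (4 * b)) : ℂ) ∂μ
      = ∫ u : ℝ, charFun μ u * Complex.exp (-b * (u - s * Complex.I) ^ 2) := by
  have gaussian_fourier (x : ℝ) :
      ∫ u : ℝ, Complex.exp (u * x * Complex.I) * Complex.exp (-b * (u - s * Complex.I) ^ 2)
        = (Real.pi / b : ℂ) ^ (1 / 2 : ℂ) * (Real.exp (-(s * x) - x ^ 2 / (4 * b)) : ℂ) := by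
    have hb' : (b : ℂ) ≠ 0 := by exact_mod_cast hb.ne'
    have h := integral_cexp_quadratic (b := -b) (by simpa using hb)
      ((2 * b * s + x) * Complex.I) (b * s ^ 2)
    rw [neg_neg] at h
    convert h using 2
    · ext u
      rw [← Complex.exp_add]
      congr 1
      linear_combination (-b * s ^ 2 : ℂ) * Complex.I_sq
    · push_cast
      congr 1
      rw [mul_pow, Complex.I_sq]
      field_simp
      ring
  have integrable_kernel : Integrable (fun p : ℝ × ℝ => Complex.exp (p.2 * p.1 * Complex.I)
      * Complex.exp (-b * (p.2 - s * Complex.I) ^ 2)) (μ.prod volume) := by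
    refine (((integrable_exp_neg_mul_sq hb).const_mul (Real.exp (b * s ^ 2))).comp_snd μ).mono'
      (by fun_prop) (ae_of_all _ fun p => ?_)
    rw [norm_mul, norm_cexp_neg_mul_sub_mul_I_sq, ← Complex.ofReal_mul,
      Complex.norm_exp_ofReal_mul_I]
    simp
  simp_rw [← integral_const_mul, ← gaussian_fourier, charFun_apply_real, ← integral_mul_const]
  exact integral_integral_swap integrable_kernel

variable {φ : ℂ → ℂ} {s K : ℝ}

lemma integral_charFun_mul_gaussian_eq_of_extension (hb : 0 < b) (hs : 0 ≤ s)
    (hc : ContinuousOn φ (Complex.im ⁻¹' Icc 0 s))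
    (hd : DifferentiableOn ℂ φ (Complex.im ⁻¹' Ioo 0 s))
    (hK : ∀ z, z.im ∈ Icc 0 s → ‖φ z‖ ≤ K) (hφ : ∀ u : ℝ, φ u = charFun μ u) :
    ∫ u : ℝ, charFun μ u * Complex.exp (-b * (u - s * Complex.I) ^ 2)
      = ∫ u : ℝ, φ (u + s * Complex.I) * Complex.exp (-b * u ^ 2) := by
  have hK₀ : 0 ≤ K := (norm_nonneg _).trans (hK 0 (by simpa using hs))
  have gaussian_tendsto : Tendsto (fun x : ℝ => K * Real.exp (b * s ^ 2) * Real.exp (-b * x ^ 2))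
      (cocompact ℝ) (𝓝 0) := by
    simpa using (tendsto_rpow_abs_mul_exp_neg_mul_sq_cocompact hb 0).const_mul
      (K * Real.exp (b * s ^ 2))
  have shift := integral_add_mul_I_eq_integral_of_norm_le
    (f := fun z => φ z * Complex.exp (-b * (z - s * Complex.I) ^ 2)) hs
    (hc.mul (by fun_prop)) (hd.mul (by fun_prop)) (fun z hz => ?_)
    ((integrable_exp_neg_mul_sq hb).const_mul (K * Real.exp (b * s ^ 2))) gaussian_tendsto
  · simpa [hφ] using shift.symm
  · have hsq : (z.im - s) ^ 2 ≤ s ^ 2 := by nlinarith [hz.1, hz.2]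
    rw [norm_mul, norm_cexp_neg_mul_sub_mul_I_sq, mul_assoc]
    gcongr
    exact hK z hz

lemma integral_exp_neg_mul_sub_sq_le_of_charFun_extension [IsFiniteMeasure μ]
    (hb : 0 < b) (hs : 0 ≤ s)
    (hc : ContinuousOn φ (Complex.im ⁻¹' Icc 0 s))
    (hd : DifferentiableOn ℂ φ (Complex.im ⁻¹' Ioo 0 s))
    (hK : ∀ z, z.im ∈ Icc 0 s → ‖φ z‖ ≤ K) (hφ : ∀ u : ℝ, φ u = charFun μ u) :
    ∫ x, Real.exp (-(s * x) - x ^ 2 / (4 * b)) ∂μ ≤ K := by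
  have identity := (integral_cexp_neg_mul_sub_sq_eq_integral_charFun (μ := μ) hb s).trans
    (integral_charFun_mul_gaussian_eq_of_extension hb hs hc hd hK hφ)
  have norm_rhs : ‖∫ u : ℝ, φ (u + s * Complex.I) * Complex.exp (-b * u ^ 2)‖
      ≤ K * √(Real.pi / b) := by
    rw [← integral_gaussian, ← integral_const_mul]
    refine norm_integral_le_of_norm_le ((integrable_exp_neg_mul_sq hb).const_mul K)
      (ae_of_all _ fun u => ?_)
    rw [norm_mul, show (-b * u ^ 2 : ℂ) = (-b * u ^ 2 : ℝ) by push_cast; rfl,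
      Complex.norm_exp_ofReal]
    gcongr
    exact hK _ (by simpa using hs)
  have norm_lhs : ‖(Real.pi / b : ℂ) ^ (1 / 2 : ℂ)
      * ∫ x, (Real.exp (-(s * x) - x ^ 2 / (4 * b)) : ℂ) ∂μ‖
      = √(Real.pi / b) * ∫ x, Real.exp (-(s * x) - x ^ 2 / (4 * b)) ∂μ := by
    have hroot : ‖(Real.pi / b : ℂ) ^ (1 / 2 : ℂ)‖ = √(Real.pi / b) := by
      rw [Real.sqrt_eq_rpow, ← Real.norm_of_nonneg (by positivity : 0 ≤ Real.pi / b),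
        ← Complex.norm_real, ← Complex.norm_cpow_real]
      push_cast
      rfl
    rw [norm_mul, hroot, integral_complex_ofReal, Complex.norm_of_nonneg
      (integral_nonneg fun x => (Real.exp_pos _).le)]
  rw [← identity, norm_lhs, mul_comm] at norm_rhs
  exact le_of_mul_le_mul_right norm_rhs (by positivity)

theorem integrable_exp_neg_mul_of_charFun_extension [IsFiniteMeasure μ] (hs : 0 ≤ s)
    (hc : ContinuousOn φ (Complex.im ⁻¹' Icc 0 s))
    (hd : DifferentiableOn ℂ φ (Complex.im ⁻¹' Ioo 0 s))
    (hK : ∀ z, z.im ∈ Icc 0 s → ‖φ z‖ ≤ K) (hφ : ∀ u : ℝ, φ u = charFun μ u) :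
    Integrable (fun x => Real.exp (-(s * x))) μ := by
  have damped_integrable {b : ℝ} (hb : 0 < b) :
      Integrable (fun x => Real.exp (-(s * x) - x ^ 2 / (4 * b))) μ := by
    refine (integrable_const (Real.exp (b * s ^ 2))).mono' (by fun_prop) (ae_of_all _ fun x => ?_)
    have complete_square :
        b * s ^ 2 - (-(s * x) - x ^ 2 / (4 * b)) = b * (s + x / (2 * b)) ^ 2 := by
      field_simp
      ring
    rw [Real.norm_of_nonneg (Real.exp_pos _).le, Real.exp_le_exp, ← sub_nonneg, complete_square]
    positivity
  refine integrable_of_tendsto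
    (G := fun (n : ℕ) x => Real.exp (-(s * x) - x ^ 2 / (4 * (n + 1 : ℝ))))
    (ae_of_all _ fun x => ?_) (fun n => by fun_prop) (ne_top_of_le_ne_top
      (ENNReal.ofReal_ne_top (r := K)) (liminf_le_of_frequently_le' (.of_forall fun n => ?_)))
  · have hdiv : Tendsto (fun n : ℕ => x ^ 2 / (4 * (n + 1 : ℝ))) atTop (𝓝 0) :=
      ((tendsto_natCast_atTop_atTop.atTop_add tendsto_const_nhds).const_mul_atTop
        four_pos).const_div_atTop _
    simpa using (hdiv.const_sub (-(s * x))).rexp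
  · have hn : (0 : ℝ) < n + 1 := by positivity
    rw [← ofReal_integral_norm_eq_lintegral_enorm (damped_integrable hn)]
    simp only [Real.norm_of_nonneg (Real.exp_pos _).le]
    exact ENNReal.ofReal_le_ofReal
      (integral_exp_neg_mul_sub_sq_le_of_charFun_extension hn hs hc hd hK hφ)

end ExponentialMoment

section FirstMoment

lemma integrable_of_measureReal_norm_gt_le {α E : Type*} [MeasurableSpace α]
    [NormedAddCommGroup E] {μ : Measure α} [IsFiniteMeasure μ] {f : α → E} {c p : ℝ}
    (hf : AEStronglyMeasurable f μ) (hp : 1 < p)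
    (htail : ∀ r > 0, μ.real {x | r < ‖f x‖} ≤ c * r ^ (-p)) : Integrable f μ := by
  refine ⟨hf, ?_⟩
  rw [hasFiniteIntegral_iff_norm,
    lintegral_eq_lintegral_meas_lt μ (ae_of_all _ fun x => norm_nonneg (f x)) hf.norm.aemeasurable,
    ← Ioc_union_Ioi_eq_Ioi zero_le_one]
  refine (lintegral_union_le _ _ _).trans_lt (ENNReal.add_lt_top.2 ⟨?_, ?_⟩)
  · calc ∫⁻ r in Ioc (0 : ℝ) 1, μ {x | r < ‖f x‖}
        ≤ ∫⁻ _ in Ioc (0 : ℝ) 1, μ univ := lintegral_mono fun r => measure_mono (subset_univ _)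
      _ < ⊤ := by simp
  · calc ∫⁻ r in Ioi (1 : ℝ), μ {x | r < ‖f x‖}
        ≤ ∫⁻ r in Ioi (1 : ℝ), ENNReal.ofReal (c * r ^ (-p)) := by
          refine setLIntegral_mono' measurableSet_Ioi fun r hr => ?_
          rw [← ofReal_measureReal]
          exact ENNReal.ofReal_le_ofReal (htail r (zero_lt_one.trans hr))
      _ < ⊤ := ((integrableOn_Ioi_rpow_of_lt (neg_lt_neg hp) zero_lt_one).const_mul
          c).lintegral_lt_top

variable {μ : Measure ℝ} [IsProbabilityMeasure μ] {c p : ℝ}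

lemma measureReal_abs_gt_le_of_norm_one_sub_charFun_le (hp : 0 ≤ p)
    (h : ∀ u, ‖1 - charFun μ u‖ ≤ c * |u| ^ p) {r : ℝ} (hr : 0 < r) :
    μ.real {x | r < |x|} ≤ 2 * c * 2 ^ p * r ^ (-p) := by
  have hr' : 0 < r⁻¹ := inv_pos.2 hr
  have hc : 0 ≤ c := by simpa using (norm_nonneg _).trans (h 1)
  have integral_le : ‖∫ u in -2 * r⁻¹..2 * r⁻¹, 1 - charFun μ u‖
      ≤ c * (2 * r⁻¹) ^ p * |2 * r⁻¹ - -2 * r⁻¹| := by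
    refine intervalIntegral.norm_integral_le_of_norm_le_const fun u hu => (h u).trans ?_
    rw [uIoc_of_le (by linarith)] at hu
    have : |u| ≤ 2 * r⁻¹ := abs_le.2 ⟨by linarith [hu.1], hu.2⟩
    gcongr
  calc μ.real {x | r < |x|}
      ≤ 2⁻¹ * r * (c * (2 * r⁻¹) ^ p * |2 * r⁻¹ - -2 * r⁻¹|) :=
        (measureReal_abs_gt_le_integral_charFun hr).trans (by gcongr)
    _ = 2 * c * 2 ^ p * r ^ (-p) := by
        rw [abs_of_pos (by linarith), Real.mul_rpow zero_le_two hr'.le, Real.inv_rpow hr.le,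
          ← Real.rpow_neg hr.le]
        field_simp
        ring

theorem integrable_id_of_norm_one_sub_charFun_le (hp : 1 < p)
    (h : ∀ u, ‖1 - charFun μ u‖ ≤ c * |u| ^ p) : Integrable (fun x => x) μ :=
  integrable_of_measureReal_norm_gt_le (by fun_prop) hp fun _ hr =>
    measureReal_abs_gt_le_of_norm_one_sub_charFun_le (zero_le_one.trans hp.le) h hr

end FirstMoment

section SkewedStable

variable {κ Y : ℝ}

/-- The characteristic exponent `κ (-iz)^Y` of the centered, totally positively skewed strictly
`Y`-stable law, for `z` in the closed upper half-plane. For the Lévy density `C x^(-Y-1)` the scale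
is `κ = C Γ(-Y)`. The principal branch of the power is holomorphic for `0 < im z` and continuous
up to the real line, which is what makes the law's left tail light. -/
noncomputable def stableExponent (κ Y : ℝ) (z : ℂ) : ℂ :=
  κ * (-Complex.I * z) ^ (Y : ℂ)

/-- The centered, totally positively skewed strictly `Y`-stable law of scale `κ`, characterized by
its characteristic function. -/
def IsSkewedStable (κ Y : ℝ) (μ : Measure ℝ) : Prop :=
  ∀ u : ℝ, charFun μ u = Complex.exp (stableExponent κ Y u)

lemma arg_neg_I_mul_ofReal {u : ℝ} (hu : u ≠ 0) :
    Complex.arg (-Complex.I * u) = -(Real.sign u * (Real.pi / 2)) := by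
  rcases hu.lt_or_gt with hneg | hpos
  · rw [Real.sign_of_neg hneg, neg_one_mul, neg_neg, Complex.arg_eq_pi_div_two_iff]
    simpa using hneg
  · rw [Real.sign_of_pos hpos, one_mul, Complex.arg_eq_neg_pi_div_two_iff]
    simpa using hpos

lemma stableExponent_ofReal (hY : Y ≠ 0) (κ u : ℝ) :
    stableExponent κ Y u = ((κ * |u| ^ Y : ℝ) : ℂ) * (((Real.cos (Real.pi * Y / 2) : ℝ) : ℂ)
      - Complex.I * ((Real.sign u : ℝ) : ℂ) * ((Real.sin (Real.pi * Y / 2) : ℝ) : ℂ)) := by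
  rcases eq_or_ne u 0 with rfl | hu
  · simp [stableExponent, hY]
  rw [stableExponent, Complex.cpow_ofReal, arg_neg_I_mul_ofReal hu]
  have hnorm : ‖-Complex.I * u‖ = |u| := by simp
  have angle : Real.sign u * (Real.pi / 2) * Y = Real.sign u * (Real.pi * Y / 2) := by ring
  rw [hnorm, neg_mul, Real.cos_neg, Real.sin_neg, angle]
  rcases Real.sign_apply_eq_of_ne_zero u hu with hsign | hsign <;>
  · simp only [hsign, neg_mul, one_mul, Real.cos_neg, Real.sin_neg]
    push_cast
    ring

lemma norm_stableExponent_ofReal (κ Y u : ℝ) : ‖stableExponent κ Y u‖ = |κ| * |u| ^ Y := by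
  simp [stableExponent, Complex.norm_cpow_real]

lemma continuousOn_stableExponent (hY : 0 < Y) (κ : ℝ) :
    ContinuousOn (stableExponent κ Y) (Complex.im ⁻¹' Ici 0) := fun z hz =>
  (continuousAt_const.mul (ContinuousAt.comp (f := fun z => -Complex.I * z)
    (Complex.continuousAt_cpow_const_of_re_pos (Or.inl (by simpa using hz)) (by simpa using hY))
    (by fun_prop))).continuousWithinAt

lemma differentiableOn_stableExponent (κ Y : ℝ) :
    DifferentiableOn ℂ (stableExponent κ Y) (Complex.im ⁻¹' Ioi 0) := fun z hz =>
  ((DifferentiableAt.cpow_const (f := fun z => -Complex.I * z) (by fun_prop)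
    (Or.inl (by simpa using hz))).const_mul _).differentiableWithinAt

-- Either `Y |arg w| ≥ π / 2`, and `w ^ Y` lies in the left half-plane, or `w` lies in a sector
-- around the positive axis on which `‖w‖` is controlled by `re w`.
lemma re_cpow_ofReal_le {w : ℂ} {s : ℝ} (hY : Y ∈ Ioc 1 3) (hw₀ : 0 ≤ w.re) (hw : w.re ≤ s) :
    (w ^ (Y : ℂ)).re ≤ (s / Real.cos (Real.pi / (2 * Y))) ^ Y := by
  have hY₀ : 0 < Y := zero_lt_one.trans hY.1
  have hangle : Real.pi / (2 * Y) < Real.pi / 2 :=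
    div_lt_div_of_pos_left Real.pi_pos two_pos (by linarith [hY.1])
  have hcos : 0 < Real.cos (Real.pi / (2 * Y)) :=
    Real.cos_pos_of_mem_Ioo ⟨by linarith [Real.pi_pos, (by positivity : 0 < Real.pi / (2 * Y))],
      hangle⟩
  have hbound : 0 ≤ (s / Real.cos (Real.pi / (2 * Y))) ^ Y :=
    Real.rpow_nonneg (div_nonneg (hw₀.trans hw) hcos.le) Y
  rw [Complex.cpow_ofReal_re, ← Real.cos_abs, abs_mul, abs_of_pos hY₀]
  rcases le_total (Real.pi / (2 * Y)) |w.arg| with hlarge | hsmall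
  · refine (mul_nonpos_of_nonneg_of_nonpos (by positivity)
      (Real.cos_nonpos_of_pi_div_two_le_of_le ?_ ?_)).trans hbound
    · calc Real.pi / 2 = Real.pi / (2 * Y) * Y := by field_simp
        _ ≤ |w.arg| * Y := by gcongr
    · calc |w.arg| * Y ≤ Real.pi / 2 * 3 := by
            gcongr
            exacts [Complex.abs_arg_le_pi_div_two_iff.2 hw₀, hY.2]
        _ = Real.pi + Real.pi / 2 := by ring
  · have hnorm : ‖w‖ ≤ s / Real.cos (Real.pi / (2 * Y)) := by
      rw [le_div_iff₀ hcos]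
      calc ‖w‖ * Real.cos (Real.pi / (2 * Y)) ≤ ‖w‖ * Real.cos |w.arg| := by
            gcongr
            exact Real.cos_le_cos_of_nonneg_of_le_pi (abs_nonneg _)
              (by linarith [Real.pi_pos]) hsmall
        _ = w.re := by rw [Real.cos_abs, Complex.norm_mul_cos_arg]
        _ ≤ s := hw
    calc ‖w‖ ^ Y * Real.cos (|w.arg| * Y) ≤ ‖w‖ ^ Y :=
          mul_le_of_le_one_right (by positivity) (Real.cos_le_one _)
      _ ≤ (s / Real.cos (Real.pi / (2 * Y))) ^ Y := by gcongr

lemma norm_cexp_sub_one_le_of_re_nonpos {z : ℂ} (hz : z.re ≤ 0) :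
    ‖Complex.exp z - 1‖ ≤ ‖z‖ := by
  have h := (convex_halfSpace_re_le 0).norm_image_sub_le_of_norm_deriv_le (f := Complex.exp)
    (𝕜 := ℂ) (C := 1) (x := 0) (y := z) (fun _ _ => Complex.differentiableAt_exp)
    (fun w hw => ?_) (by simp) hz
  · simpa using h
  · simpa [Complex.norm_exp] using hw

namespace IsSkewedStable

variable {μ : Measure ℝ} [IsProbabilityMeasure μ]

lemma re_stableExponent_nonpos (hμ : IsSkewedStable κ Y μ) (u : ℝ) :
    (stableExponent κ Y u).re ≤ 0 := by
  rw [← Real.exp_le_one_iff, ← Complex.norm_exp, ← hμ u]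
  exact norm_charFun_le_one u

theorem integrable_id (hμ : IsSkewedStable κ Y μ) (hY : 1 < Y) : Integrable (fun x => x) μ :=
  integrable_id_of_norm_one_sub_charFun_le hY fun u => by
    rw [norm_sub_rev, hμ u, ← norm_stableExponent_ofReal]
    exact norm_cexp_sub_one_le_of_re_nonpos (hμ.re_stableExponent_nonpos u)

theorem integrable_exp_neg_mul (hμ : IsSkewedStable κ Y μ) (hκ : 0 ≤ κ) (hY : Y ∈ Ioc 1 3)
    {s : ℝ} (hs : 0 ≤ s) : Integrable (fun x => Real.exp (-(s * x))) μ := by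
  refine integrable_exp_neg_mul_of_charFun_extension
    (φ := fun z => Complex.exp (stableExponent κ Y z))
    (K := Real.exp (κ * (s / Real.cos (Real.pi / (2 * Y))) ^ Y)) hs ?_ ?_ (fun z hz => ?_)
    (fun u => (hμ u).symm)
  · exact ((continuousOn_stableExponent (zero_lt_one.trans hY.1) κ).mono
      (preimage_mono Icc_subset_Ici_self)).cexp
  · exact ((differentiableOn_stableExponent κ Y).mono (preimage_mono Ioo_subset_Ioi_self)).cexp
  · rw [Complex.norm_exp, stableExponent, Complex.re_ofReal_mul]
    gcongr
    exact re_cpow_ofReal_le hY (by simpa using hz.1) (by simpa using hz.2)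

end IsSkewedStable

variable {Ω : Type*} [MeasurableSpace Ω] {P : Measure Ω} {U : Ω → ℝ}

lemma isSkewedStable_map_of_integral_cexp_eq (hY : Y ≠ 0) (hU : AEMeasurable U P)
    (h : ∀ u : ℝ, (∫ ω, Complex.exp (Complex.I * u * (U ω)) ∂P) =
      Complex.exp (((κ * |u| ^ Y : ℝ) : ℂ) * (((Real.cos (Real.pi * Y / 2) : ℝ) : ℂ)
        - Complex.I * ((Real.sign u : ℝ) : ℂ) * ((Real.sin (Real.pi * Y / 2) : ℝ) : ℂ)))) :
    IsSkewedStable κ Y (P.map U) := fun u => by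
  rw [charFun_apply_real, integral_map hU (by fun_prop), stableExponent_ofReal hY, ← h u]
  refine integral_congr_ae (ae_of_all _ fun ω => ?_)
  ring_nf

lemma integrable_of_isSkewedStable_map [IsProbabilityMeasure P] (hU : AEMeasurable U P)
    (hUlaw : IsSkewedStable κ Y (P.map U)) (hY : 1 < Y) : Integrable U P := by
  have := Measure.isProbabilityMeasure_map hU
  exact (hUlaw.integrable_id hY).comp_aemeasurable hU

lemma integrable_exp_neg_mul_of_isSkewedStable_map [IsProbabilityMeasure P]
    (hU : AEMeasurable U P) (hUlaw : IsSkewedStable κ Y (P.map U)) (hκ : 0 ≤ κ)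
    (hY : Y ∈ Ioc 1 3) {s : ℝ} (hs : 0 ≤ s) :
    Integrable (fun ω => Real.exp (-(s * U ω))) P := by
  have := Measure.isProbabilityMeasure_map hU
  exact (hUlaw.integrable_exp_neg_mul hκ hY hs).comp_aemeasurable hU

end SkewedStable

lemma Gamma_neg_pos_of_mem_Ioo {Y : ℝ} (hY : Y ∈ Ioo 1 2) : 0 < Real.Gamma (-Y) := by
  have h₁ : Real.Gamma (-Y + 1) = -Y * Real.Gamma (-Y) :=
    Real.Gamma_add_one (by linarith [hY.1])
  have h₂ : Real.Gamma (-Y + 1 + 1) = (-Y + 1) * Real.Gamma (-Y + 1) :=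
    Real.Gamma_add_one (by linarith [hY.1])
  have hpos : 0 < (-Y + 1) * (-Y) * Real.Gamma (-Y) := by
    rw [mul_assoc, ← h₁, ← h₂]
    exact Real.Gamma_pos_of_pos (by linarith [hY.2])
  exact pos_of_mul_pos_right hpos (by nlinarith [hY.1])

section Estimates

lemma integrable_exp_neg_add {Ω : Type*} [MeasurableSpace Ω] {P : Measure Ω} {f g : Ω → ℝ}
    (hfm : AEMeasurable f P) (hgm : AEMeasurable g P)
    (hf : Integrable (fun ω => Real.exp (-(2 * f ω))) P)
    (hg : Integrable (fun ω => Real.exp (-(2 * g ω))) P) :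
    Integrable (fun ω => Real.exp (-(f ω + g ω))) P := by
  refine (hf.add hg).mono' (by fun_prop) (ae_of_all _ fun ω => ?_)
  have exp_double (x : ℝ) : Real.exp (-(2 * x)) = Real.exp (-x) ^ 2 := by
    rw [← Real.exp_nat_mul]
    push_cast
    ring_nf
  rw [Pi.add_apply, Real.norm_of_nonneg (Real.exp_pos _).le, neg_add, Real.exp_add, exp_double,
    exp_double]
  nlinarith [sq_nonneg (Real.exp (-f ω) - Real.exp (-g ω)), sq_nonneg (Real.exp (-f ω)),
    sq_nonneg (Real.exp (-g ω))]

lemma abs_exp_mul_sub_one_le {h : ℝ} (hh : h ∈ Icc 0 1) (y : ℝ) :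
    |Real.exp (h * y) - 1| ≤ h * (|y| + Real.exp y) := by
  have convexity : Real.exp (h * y) ≤ 1 - h + h * Real.exp y := by
    simpa using convexOn_exp.2 (mem_univ 0) (mem_univ y) (sub_nonneg.2 hh.2) hh.1
      (sub_add_cancel 1 h)
  have tangent := Real.add_one_le_exp (h * y)
  have hneg : h * -y ≤ h * |y| := mul_le_mul_of_nonneg_left (neg_le_abs y) hh.1
  rw [abs_le]
  constructor <;>
    nlinarith [mul_nonneg hh.1 (abs_nonneg y), mul_nonneg hh.1 (Real.exp_pos y).le, hh.1]

lemma abs_integral_indicator_exp_sub_one_le {Ω : Type*} [MeasurableSpace Ω] {P : Measure Ω}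
    {Z : Ω → ℝ} (hZ : Integrable Z P) (hexp : Integrable (fun ω => Real.exp (-Z ω)) P)
    {h : ℝ} (hh : h ∈ Icc 0 1) (A : Set Ω) :
    |∫ ω, A.indicator (fun ω => Real.exp (-(h * Z ω)) - 1) ω ∂P|
      ≤ h * ∫ ω, (|Z ω| + Real.exp (-Z ω)) ∂P := by
  rw [← integral_const_mul, ← Real.norm_eq_abs]
  refine norm_integral_le_of_norm_le ((hZ.abs.add hexp).const_mul h) (ae_of_all _ fun ω => ?_)
  refine (norm_indicator_le_norm_self _ _).trans ?_
  simpa using abs_exp_mul_sub_one_le hh (-Z ω)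

lemma abs_one_sub_exp_neg_mul_div_le {a w : ℝ} (ha : 0 < a) (hw : 0 ≤ w) :
    |(1 - Real.exp (-(a * w))) / a| ≤ w := by
  have hexp : Real.exp (-(a * w)) ≤ 1 := Real.exp_le_one_iff.2 (by nlinarith)
  rw [abs_of_nonneg (div_nonneg (sub_nonneg.2 hexp) ha.le), div_le_iff₀ ha]
  linarith [Real.add_one_le_exp (-(a * w))]

lemma abs_setIntegral_mul_one_sub_exp_div_mul_le {F ρ : ℝ → ℝ} {K a : ℝ} (ha : 0 < a)
    (hF : ∀ w > 0, |F w| ≤ K) (hρ : ∀ w > 0, 0 ≤ ρ w)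
    (hint : IntegrableOn (fun w => w * ρ w) (Ioi 0)) :
    |∫ w in Ioi 0, F w * ((1 - Real.exp (-(a * w))) / a) * ρ w|
      ≤ K * ∫ w in Ioi 0, w * ρ w := by
  rw [← integral_const_mul, ← Real.norm_eq_abs]
  refine norm_integral_le_of_norm_le (hint.const_mul K) ?_
  filter_upwards [ae_restrict_mem measurableSet_Ioi] with w hw
  rw [norm_mul, norm_mul, Real.norm_of_nonneg (hρ w hw), ← mul_assoc]
  have hK : 0 ≤ K := (abs_nonneg _).trans (hF w hw)
  gcongr
  exacts [hρ w hw, hF w hw, abs_one_sub_exp_neg_mul_div_le ha (le_of_lt hw)]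

lemma integrable_mul_exp_neg_sq_div {σ : ℝ} (hσ : σ ≠ 0) (c : ℝ) :
    Integrable fun w : ℝ => w * (Real.exp (-(w ^ 2) / (2 * σ ^ 2)) / c) := by
  have h := (integrable_mul_exp_neg_mul_sq (b := 1 / (2 * σ ^ 2)) (by positivity)).div_const c
  refine h.congr (ae_of_all _ fun w => ?_)
  have hexponent : -(1 / (2 * σ ^ 2)) * w ^ 2 = -(w ^ 2) / (2 * σ ^ 2) := by ring
  simp only [hexponent, mul_div_assoc]

lemma tendsto_rpow_nhdsGT_zero {e : ℝ} (he : 0 < e) :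
    Tendsto (fun t : ℝ => t ^ e) (𝓝[>] 0) (𝓝 0) := by
  simpa [Real.zero_rpow he.ne'] using
    (Real.continuousAt_rpow_const 0 e (Or.inr he.le)).tendsto.mono_left nhdsWithin_le_nhds

lemma tendsto_rpow_mul_of_abs_le_rpow_mul {f : ℝ → ℝ} {p q : ℝ} (K : ℝ)
    (hpq : 0 < p + q) (hf : ∀ᶠ t in 𝓝[>] 0, |f t| ≤ t ^ q * K) :
    Tendsto (fun t => t ^ p * f t) (𝓝[>] 0) (𝓝 0) := by
  refine squeeze_zero_norm' (a := fun t => t ^ (p + q) * K) ?_ ?_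
  · filter_upwards [self_mem_nhdsWithin, hf] with t ht hft
    have ht₀ : 0 < t := ht
    rw [norm_mul, Real.norm_of_nonneg (Real.rpow_nonneg ht₀.le p), Real.rpow_add ht₀, mul_assoc]
    exact mul_le_mul_of_nonneg_left hft (Real.rpow_nonneg ht₀.le p)
  · simpa using (tendsto_rpow_nhdsGT_zero hpq).mul_const K

end Estimates

theorem stmt15_general {Ω : Type*} [MeasurableSpace Ω] {P : Measure Ω} [IsProbabilityMeasure P]
    {Y κ₁ κ₂ a b σ : ℝ} (hY : Y ∈ Ioo 1 2) (hκ₁ : 0 ≤ κ₁) (hκ₂ : 0 ≤ κ₂) (ha : 0 ≤ a) (hb : 0 ≤ b)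
    (hσ : σ ≠ 0) {U V : Ω → ℝ} (hU : AEMeasurable U P) (hV : AEMeasurable V P)
    (hUlaw : IsSkewedStable κ₁ Y (P.map U)) (hVlaw : IsSkewedStable κ₂ Y (P.map V)) :
    Tendsto (fun t : ℝ => t ^ (-(1:ℝ)/2) * ∫ w in Ioi (0:ℝ),
      (∫ ω, indicator {ω | U ω - V ω ≤ -(t ^ ((1:ℝ)/2 - 1/Y) * w)}
          (fun ω => Real.exp (-(t ^ (1/Y) * (a * U ω + b * V ω))) - 1) ω ∂P)
        * ((1 - Real.exp (-(√t * w))) / √t)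
        * (Real.exp (-(w ^ 2) / (2 * σ ^ 2)) / √(2 * Real.pi * σ ^ 2)))
      (𝓝[>] 0) (𝓝 0) := by
  have hY₀ : 0 < Y := zero_lt_one.trans hY.1
  have hY₃ : Y ∈ Ioc 1 3 := ⟨hY.1, by linarith [hY.2]⟩
  have hZ : Integrable (fun ω => a * U ω + b * V ω) P :=
    ((integrable_of_isSkewedStable_map hU hUlaw hY.1).const_mul a).add
      ((integrable_of_isSkewedStable_map hV hVlaw hY.1).const_mul b)
  have hexpZ : Integrable (fun ω => Real.exp (-(a * U ω + b * V ω))) P := by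
    refine integrable_exp_neg_add (hU.const_mul a) (hV.const_mul b) ?_ ?_ <;>
      simp only [← mul_assoc]
    · exact integrable_exp_neg_mul_of_isSkewedStable_map hU hUlaw hκ₁ hY₃ (by positivity)
    · exact integrable_exp_neg_mul_of_isSkewedStable_map hV hVlaw hκ₂ hY₃ (by positivity)
  have hsmall : ∀ᶠ t : ℝ in 𝓝[>] 0, t ^ (1 / Y) < 1 :=
    (tendsto_rpow_nhdsGT_zero (one_div_pos.2 hY₀)).eventually_lt_const zero_lt_one
  refine tendsto_rpow_mul_of_abs_le_rpow_mul (q := 1 / Y)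
    ((∫ ω, (|a * U ω + b * V ω| + Real.exp (-(a * U ω + b * V ω))) ∂P)
      * ∫ w in Ioi (0 : ℝ), w * (Real.exp (-(w ^ 2) / (2 * σ ^ 2)) / √(2 * Real.pi * σ ^ 2)))
    (by linarith [one_div_lt_one_div_of_lt hY₀ hY.2]) ?_
  filter_upwards [self_mem_nhdsWithin, hsmall] with t ht hlt
  have hscale : t ^ (1 / Y) ∈ Icc 0 1 := ⟨Real.rpow_nonneg (le_of_lt ht) _, hlt.le⟩
  rw [← mul_assoc]
  exact abs_setIntegral_mul_one_sub_exp_div_mul_le (Real.sqrt_pos.2 ht)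
    (fun w _ => abs_integral_indicator_exp_sub_one_le hZ hexpZ hscale _) (fun w _ => by positivity)
    (integrable_mul_exp_neg_sq_div hσ _).integrableOn

/-- Negligibility of the correlation term `B₂₁` (display (AsyJ22)):
`t^(−1/2)·B₂₁(t) → 0` as `t → 0⁺`. -/
theorem stmt15
    {Ω : Type} [MeasurableSpace Ω] (P : Measure Ω) [IsProbabilityMeasure P]
    (Y C M G σ : ℝ) (hY : Y ∈ Set.Ioo (1:ℝ) 2) (hC : 0 < C) (hM : 1 < M) (hG : 0 < G)
    (hσ : 0 < σ)
    (U V : Ω → ℝ) (hU : Measurable U) (hV : Measurable V)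
    (hIndep : IndepFun U V P)
    (hUchar : ∀ u : ℝ, (∫ ω, Complex.exp (Complex.I * u * (U ω)) ∂P) =
      Complex.exp (((C * Real.Gamma (-Y) * |u| ^ Y : ℝ) : ℂ) *
        (((Real.cos (Real.pi * Y / 2) : ℝ) : ℂ)
          - Complex.I * ((Real.sign u : ℝ) : ℂ) * ((Real.sin (Real.pi * Y / 2) : ℝ) : ℂ))))
    (hVchar : ∀ u : ℝ, (∫ ω, Complex.exp (Complex.I * u * (V ω)) ∂P) =
      Complex.exp (((C * Real.Gamma (-Y) * |u| ^ Y : ℝ) : ℂ) *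
        (((Real.cos (Real.pi * Y / 2) : ℝ) : ℂ)
          - Complex.I * ((Real.sign u : ℝ) : ℂ) * ((Real.sin (Real.pi * Y / 2) : ℝ) : ℂ))))
    (B₂₁ : ℝ → ℝ)
    (hB₂₁ : ∀ t > (0:ℝ), B₂₁ t = ∫ w in Set.Ioi (0:ℝ),
      (∫ ω, Set.indicator {ω | U ω - V ω ≤ -(t ^ ((1:ℝ)/2 - 1/Y) * w)}
          (fun ω => Real.exp (-(t ^ (1/Y) * ((M - 1) * U ω + (G + 1) * V ω))) - 1) ω ∂P)
        * ((1 - Real.exp (-(Real.sqrt t * w))) / Real.sqrt t)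
        * (Real.exp (-(w ^ 2) / (2 * σ ^ 2)) / Real.sqrt (2 * Real.pi * σ ^ 2))) :
    Filter.Tendsto (fun t => t ^ (-(1:ℝ)/2) * B₂₁ t) (𝓝[>] (0:ℝ)) (𝓝 0) := by
  have hκ : 0 ≤ C * Real.Gamma (-Y) := (mul_pos hC (Gamma_neg_pos_of_mem_Ioo hY)).le
  have hY₀ : Y ≠ 0 := (zero_lt_one.trans hY.1).ne'
  refine (stmt15_general hY hκ hκ (sub_nonneg.2 hM.le) (by positivity : 0 ≤ G + 1) hσ.ne'
    hU.aemeasurable hV.aemeasurable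
    (isSkewedStable_map_of_integral_cexp_eq hY₀ hU.aemeasurable hUchar)
    (isSkewedStable_map_of_integral_cexp_eq hY₀ hV.aemeasurable hVchar)).congr' ?_
  filter_upwards [self_mem_nhdsWithin] with t ht using by rw [hB₂₁ t ht]
end

section
/- Limit of the Gaussian-averaged double integral (display (ExpAsyJ332)): lim_{t→0⁺} t^{−1}·∫₀^∞ ( ∫₀^∞ (e^{−x} − 1)·P( U − V ≥ t^{1/2−1/Y}·w and M*·U + G*·V ≤ t^{−1/Y}·x ≤ M·U + G·V ) dx )·e^{√t·w}·(e^{−w²/(2σ²)}/√(2πσ²)) dw = −(C·Γ(−Y)/2)·(M^Y − (M−1)^Y). -/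
open MeasureTheory ProbabilityTheory Filter Topology Set

/-!
The characteristic function of `U` is the boundary value on the real line of `exp (K (-iz) ^ Y)`,
`K = C Γ(-Y)`, which is holomorphic in the upper half-plane. Testing it against Gaussians and
shifting the contour gives the Laplace transform `E exp (-l U) = exp (K l ^ Y)`. Since `1 < Y`, it
follows that `E U = 0` and hence `E (exp (-r U) - 1 + r U) = exp (K r ^ Y) - 1 ~ K r ^ Y` as
`r → 0⁺`, to which the negative part of `U` contributes only `O(r ^ 2)`.

After rescaling by `r = t ^ (1 / Y)` and applying Fubini, the inner integral becomes minus the mean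
of `φ (M r U + G r V) - φ ((M - 1) r U + (G + 1) r V)` on the event `√t w ≤ r U - r V`, where
`φ (x) = exp (-x⁺) - 1 + x⁺`. A mean of order `r ^ Y` with `Y < 2` comes from a single big jump:
`U` must be of order `1 / r`, and then by independence `r V` is negligible and the event is
satisfied. Thus the mean is asymptotic to `K (M ^ Y - (M - 1) ^ Y) r ^ Y`, where `r ^ Y = t`, and
the Gaussian weight on the half-line contributes the factor `1 / 2`.
-/

section ContourShift

open Complex

variable {E : Type*} [NormedAddCommGroup E] {F : ℂ → E} {B : ℝ → ℝ} {a : ℝ}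

lemma integrable_comp_add_mul_I (hc : ContinuousOn F (univ ×ℂ Icc 0 a)) (hB : Integrable B)
    (hF : ∀ x : ℝ, ∀ y ∈ Icc 0 a, ‖F (x + y * I)‖ ≤ B x) {y : ℝ} (hy : y ∈ Icc 0 a) :
    Integrable fun x : ℝ ↦ F (x + y * I) := by
  have hcont : Continuous fun x : ℝ ↦ F (x + y * I) :=
    hc.comp_continuous (by fun_prop) fun x ↦ by simpa [mem_reProdIm] using hy
  exact hB.mono' hcont.aestronglyMeasurable (ae_of_all _ fun x ↦ hF x y hy)

variable [NormedSpace ℂ E]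

lemma tendsto_verticalIntegral_zero {l : Filter ℝ} (ha : 0 ≤ a) (hB : Tendsto B l (𝓝 0))
    (hF : ∀ x : ℝ, ∀ y ∈ Icc 0 a, ‖F (x + y * I)‖ ≤ B x) :
    Tendsto (fun x : ℝ ↦ ∫ y : ℝ in (0 : ℝ)..a, F (x + y * I)) l (𝓝 0) := by
  refine squeeze_zero_norm (a := fun x ↦ B x * |a - 0|) (fun x ↦ ?_) (by simpa using hB.mul_const _)
  refine intervalIntegral.norm_integral_le_of_norm_le_const fun y hy ↦ hF x y ?_
  rw [uIoc_of_le ha] at hy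
  exact Ioc_subset_Icc_self hy

theorem integral_comp_add_mul_I_eq [CompleteSpace E] (ha : 0 ≤ a)
    (hc : ContinuousOn F (univ ×ℂ Icc 0 a)) (hd : DifferentiableOn ℂ F (univ ×ℂ Ioo 0 a))
    (hB : Integrable B) (hB₀ : Tendsto B (cocompact ℝ) (𝓝 0))
    (hF : ∀ x : ℝ, ∀ y ∈ Icc 0 a, ‖F (x + y * I)‖ ≤ B x) :
    ∫ x : ℝ, F (x + a * I) = ∫ x : ℝ, F x := by
  have rectangle (T : ℝ) : (∫ x : ℝ in -T..T, F x) - (∫ x : ℝ in -T..T, F (x + a * I)) +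
      I • (∫ y : ℝ in (0 : ℝ)..a, F (T + y * I)) -
      I • (∫ y : ℝ in (0 : ℝ)..a, F ((-T : ℝ) + y * I)) = 0 := by
    have hsub : ∀ s : Set ℝ, s ×ℂ Icc 0 a ⊆ univ ×ℂ Icc 0 a := fun s z hz ↦ ⟨mem_univ _, hz.2⟩
    have hsub' : ∀ s : Set ℝ, s ×ℂ Ioo 0 a ⊆ univ ×ℂ Ioo 0 a := fun s z hz ↦ ⟨mem_univ _, hz.2⟩
    simpa [ha] using
      integral_boundary_rect_eq_zero_of_continuousOn_of_differentiableOn F (-T) (T + a * I)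
        (by simpa [ha] using hc.mono (hsub _)) (by simpa [ha] using hd.mono (hsub' _))
  have top := intervalIntegral_tendsto_integral
    (integrable_comp_add_mul_I hc hB hF ⟨ha, le_rfl⟩) tendsto_neg_atTop_atBot tendsto_id
  have bottom : Tendsto (fun T : ℝ ↦ ∫ x : ℝ in -T..T, F x) atTop (𝓝 (∫ x : ℝ, F x)) := by
    simpa using intervalIntegral_tendsto_integral
      (integrable_comp_add_mul_I hc hB hF ⟨le_rfl, ha⟩) tendsto_neg_atTop_atBot tendsto_id
  have right := tendsto_verticalIntegral_zero ha (hB₀.mono_left atTop_le_cocompact) hF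
  have left := (tendsto_verticalIntegral_zero ha (hB₀.mono_left atBot_le_cocompact) hF).comp
    tendsto_neg_atTop_atBot
  have limit := ((bottom.sub top).add (right.const_smul I)).sub (left.const_smul I)
  have := tendsto_nhds_unique limit (tendsto_const_nhds.congr fun T ↦ (rectangle T).symm)
  rw [smul_zero, add_zero, sub_zero, sub_eq_zero] at this
  exact this.symm

end ContourShift

section MonotoneConvergence

lemma integrable_and_integral_eq_of_monotone {α : Type*} [MeasurableSpace α] {μ : Measure α}
    {g : ℕ → α → ℝ} {f : α → ℝ} {L : ℝ} (hg : ∀ n, Integrable (g n) μ)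
    (hmono : ∀ᵐ x ∂μ, Monotone fun n ↦ g n x)
    (hlim : ∀ᵐ x ∂μ, Tendsto (fun n ↦ g n x) atTop (𝓝 (f x)))
    (hL : Tendsto (fun n ↦ ∫ x, g n x ∂μ) atTop (𝓝 L)) :
    Integrable f μ ∧ ∫ x, f x ∂μ = L := by
  have hsub (n : ℕ) : Integrable (g n - g 0) μ := (hg n).sub (hg 0)
  have hlint : Tendsto (fun n ↦ ∫⁻ x, ENNReal.ofReal ((g n - g 0) x) ∂μ) atTop
      (𝓝 (ENNReal.ofReal (L - ∫ x, g 0 x ∂μ))) := by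
    refine (ENNReal.tendsto_ofReal (hL.sub_const _)).congr fun n ↦ ?_
    rw [← integral_sub (hg n) (hg 0)]
    refine ofReal_integral_eq_lintegral_ofReal (hsub n) ?_
    filter_upwards [hmono] with x hx using sub_nonneg.2 (hx (Nat.zero_le n))
  have hlint' := lintegral_tendsto_of_tendsto_of_monotone (μ := μ)
    (f := fun n x ↦ ENNReal.ofReal ((g n - g 0) x)) (F := fun x ↦ ENNReal.ofReal ((f - g 0) x))
    (fun n ↦ (hsub n).aemeasurable.ennreal_ofReal)
    (by filter_upwards [hmono] with x hx i j hij using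
      ENNReal.ofReal_le_ofReal (sub_le_sub_right (hx hij) _))
    (by filter_upwards [hlim] with x hx using ENNReal.tendsto_ofReal (hx.sub_const _))
  have hf_meas : AEStronglyMeasurable f μ :=
    aestronglyMeasurable_of_tendsto_ae atTop (fun n ↦ (hg n).aestronglyMeasurable) hlim
  have hf_sub : Integrable (f - g 0) μ := by
    refine ⟨hf_meas.sub (hg 0).aestronglyMeasurable, ?_⟩
    rw [hasFiniteIntegral_iff_ofReal, tendsto_nhds_unique hlint' hlint]
    · exact ENNReal.ofReal_lt_top
    · filter_upwards [hmono, hlim] with x hx hx' using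
        sub_nonneg.2 (hx.ge_of_tendsto hx' 0)
  have hf : Integrable f μ := by simpa using hf_sub.add (hg 0)
  exact ⟨hf, tendsto_nhds_unique (integral_tendsto_of_tendsto_of_monotone hg hf hmono hlim) hL⟩

end MonotoneConvergence

section LaplaceTransform

open Complex

variable {f : ℂ → ℂ} {A c s l : ℝ}

lemma norm_cexp_neg_sub_mul_I_sq (z : ℂ) (a : ℝ) :
    ‖cexp (-(z - a * I) ^ 2)‖ = Real.exp (-z.re ^ 2 + (z.im - a) ^ 2) := by
  rw [norm_exp]
  congr 1
  simp [pow_two]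
  ring

lemma integral_cexp_mul_cexp_neg_sub_mul_I_sq (x a : ℝ) :
    ∫ v : ℝ, cexp (x * v * I) * cexp (-(v - a * I) ^ 2) =
      Real.sqrt Real.pi * Real.exp (-(x * a) - x ^ 2 / 4) := by
  have hfun (v : ℝ) : cexp (x * v * I) * cexp (-(v - a * I) ^ 2) =
      cexp (a ^ 2) * (cexp (I * (x + 2 * a) * v) * cexp (-1 * v ^ 2)) := by
    rw [← Complex.exp_add, ← Complex.exp_add, ← Complex.exp_add]
    congr 1
    linear_combination (a ^ 2 : ℂ) * -I_sq
  simp_rw [hfun]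
  rw [integral_const_mul, fourierIntegral_gaussian (by simp), mul_left_comm, ← Complex.exp_add]
  congr 1
  · rw [Real.sqrt_eq_rpow, ofReal_cpow Real.pi_pos.le]
    simp
  · push_cast
    congr 1
    ring

lemma integral_charFun_mul_gaussian (μ : Measure ℝ) [IsFiniteMeasure μ] (hs : s ≠ 0) :
    ∫ v : ℝ, charFun μ (s * v) * cexp (-(v - (l / s : ℝ) * I) ^ 2) =
      Real.sqrt Real.pi * (∫ x, Real.exp (-(l * x) - (s * x) ^ 2 / 4) ∂μ : ℝ) := by
  have hgauss : Integrable fun v : ℝ ↦ cexp (-(v - (l / s : ℝ) * I) ^ 2) := by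
    simpa [sub_eq_add_neg] using
      GaussianFourier.integrable_cexp_neg_mul_sq_add_real_mul_I (b := 1) (by simp) (-(l / s))
  have hint : Integrable (Function.uncurry fun v x : ℝ ↦
      cexp ((s * x : ℝ) * v * I) * cexp (-(v - (l / s : ℝ) * I) ^ 2)) (volume.prod μ) := by
    refine (hgauss.comp_fst μ).mono (by fun_prop) (ae_of_all _ fun p ↦ ?_)
    rw [Function.uncurry, norm_mul, ← ofReal_mul, norm_exp_ofReal_mul_I, one_mul]
  calc ∫ v : ℝ, charFun μ (s * v) * cexp (-(v - (l / s : ℝ) * I) ^ 2)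
      = ∫ v : ℝ, (∫ x, cexp ((s * x : ℝ) * v * I) * cexp (-(v - (l / s : ℝ) * I) ^ 2) ∂μ) := by
        simp_rw [integral_mul_const, charFun_apply_real]
        push_cast
        simp_rw [mul_right_comm (s : ℂ)]
    _ = ∫ x, (∫ v : ℝ, cexp ((s * x : ℝ) * v * I) * cexp (-(v - (l / s : ℝ) * I) ^ 2)) ∂μ :=
        integral_integral_swap hint
    _ = Real.sqrt Real.pi * (∫ x, Real.exp (-(l * x) - (s * x) ^ 2 / 4) ∂μ : ℝ) := by
        simp_rw [integral_cexp_mul_cexp_neg_sub_mul_I_sq]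
        rw [integral_const_mul, integral_complex_ofReal]
        congr! 5 with x
        field_simp

lemma norm_mul_exp_neg_sq_le_of_growth {x y : ℝ}
    (hf : ∀ z : ℂ, 0 ≤ z.im → ‖f z‖ ≤ A * Real.exp (c * ‖z‖ ^ 2))
    (hcs : c * s ^ 2 ≤ 1 / 2) (hy : 0 ≤ y) :
    ‖f (s * x + y * I)‖ * Real.exp (-x ^ 2) ≤
      A * Real.exp (c * y ^ 2) * Real.exp (-(1 / 2) * x ^ 2) := by
  have hA : 0 ≤ A :=
    nonneg_of_mul_nonneg_left ((norm_nonneg _).trans (hf 0 le_rfl)) (Real.exp_pos _)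
  have hfz := hf (s * x + y * I) (by simpa using hy)
  have hnorm : ‖(s * x + y * I : ℂ)‖ ^ 2 = s ^ 2 * x ^ 2 + y ^ 2 := by
    rw [Complex.sq_norm, ← ofReal_mul, normSq_add_mul_I, mul_pow]
  rw [hnorm] at hfz
  refine (mul_le_mul_of_nonneg_right hfz (Real.exp_pos _).le).trans ?_
  rw [mul_assoc, mul_assoc, ← Real.exp_add, ← Real.exp_add]
  gcongr A * Real.exp ?_
  linarith [mul_le_mul_of_nonneg_right hcs (sq_nonneg x)]

lemma integral_mul_gaussian_shift (hc : ContinuousOn f {z | 0 ≤ z.im})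
    (hd : DifferentiableOn ℂ f {z | 0 < z.im})
    (hf : ∀ z : ℂ, 0 ≤ z.im → ‖f z‖ ≤ A * Real.exp (c * ‖z‖ ^ 2))
    (hl : 0 ≤ l) (hs : 0 < s) (hcs : c * s ^ 2 ≤ 1 / 2) :
    ∫ v : ℝ, f (s * v) * cexp (-(v - (l / s : ℝ) * I) ^ 2) =
      ∫ v : ℝ, f (s * v + l * I) * cexp (-v ^ 2) := by
  have hA : 0 ≤ A :=
    nonneg_of_mul_nonneg_left ((norm_nonneg _).trans (hf 0 le_rfl)) (Real.exp_pos _)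
  have hs' : (s : ℂ) ≠ 0 := mod_cast hs.ne'
  set a := l / s with ha_def
  have ha : 0 ≤ a := by positivity
  have hgauss₀ : Tendsto (fun x : ℝ ↦ Real.exp (-(1 / 2) * x ^ 2)) (cocompact ℝ) (𝓝 0) := by
    simpa using tendsto_rpow_abs_mul_exp_neg_mul_sq_cocompact one_half_pos 0
  have hbound (x y : ℝ) (hy : y ∈ Icc 0 a) :
      ‖f (s * (x + y * I)) * cexp (-(x + y * I - a * I) ^ 2)‖ ≤
        A * Real.exp (a ^ 2) * Real.exp (-(1 / 2) * x ^ 2) := by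
    have hre : (x + y * I : ℂ).re = x := by simp
    have him : (x + y * I : ℂ).im = y := by simp
    have hexp : c * (s * y) ^ 2 + (y - a) ^ 2 ≤ a ^ 2 := by
      nlinarith [mul_le_mul_of_nonneg_right hcs (sq_nonneg y), mul_nonneg hy.1 (sub_nonneg.2 hy.2)]
    have hfz := norm_mul_exp_neg_sq_le_of_growth (x := x) hf hcs (mul_nonneg hs.le hy.1)
    rw [norm_mul, norm_cexp_neg_sub_mul_I_sq, hre, him, Real.exp_add,
      ← mul_assoc, mul_add, ← mul_assoc, ← ofReal_mul s y]
    calc ‖f ((s : ℂ) * x + (s * y : ℝ) * I)‖ * Real.exp (-x ^ 2) * Real.exp ((y - a) ^ 2)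
        ≤ A * Real.exp (c * (s * y) ^ 2) * Real.exp (-(1 / 2) * x ^ 2) *
            Real.exp ((y - a) ^ 2) := by gcongr
      _ = A * Real.exp (c * (s * y) ^ 2 + (y - a) ^ 2) * Real.exp (-(1 / 2) * x ^ 2) := by
          rw [Real.exp_add]; ring
      _ ≤ A * Real.exp (a ^ 2) * Real.exp (-(1 / 2) * x ^ 2) := by gcongr
  have shift := integral_comp_add_mul_I_eq (F := fun z ↦ f (s * z) * cexp (-(z - a * I) ^ 2))
    (B := fun x ↦ A * Real.exp (a ^ 2) * Real.exp (-(1 / 2) * x ^ 2)) ha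
    ((hc.comp (by fun_prop) fun z hz ↦ by simpa using mul_nonneg hs.le hz.2.1).mul (by fun_prop))
    ((hd.comp (by fun_prop) fun z hz ↦ by simpa using mul_pos hs hz.2.1).mul (by fun_prop))
    ((integrable_exp_neg_mul_sq one_half_pos).const_mul _) (by simpa using hgauss₀.const_mul _)
    hbound
  rw [← shift]
  congr! 4 with v
  · rw [ha_def]; push_cast; field_simp
  · ring

lemma eventually_mul_sq_le_half (c : ℝ) : ∀ᶠ s : ℝ in 𝓝[>] 0, c * s ^ 2 ≤ 1 / 2 := by
  have h : Tendsto (fun s : ℝ ↦ c * s ^ 2) (𝓝 0) (𝓝 0) :=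
    Continuous.tendsto' (by fun_prop) 0 0 (by simp)
  exact (h.mono_left nhdsWithin_le_nhds).eventually_le_const one_half_pos

lemma tendsto_integral_mul_gaussian (hc : ContinuousOn f {z | 0 ≤ z.im})
    (hf : ∀ z : ℂ, 0 ≤ z.im → ‖f z‖ ≤ A * Real.exp (c * ‖z‖ ^ 2)) (hl : 0 ≤ l) :
    Tendsto (fun s : ℝ ↦ ∫ v : ℝ, f (s * v + l * I) * cexp (-v ^ 2)) (𝓝[>] 0)
      (𝓝 (Real.sqrt Real.pi * f (l * I))) := by
  have hcont : Continuous fun p : ℝ × ℝ ↦ f (p.1 * p.2 + l * I) :=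
    hc.comp_continuous (by fun_prop) fun p ↦ by simpa using hl
  have hgauss (v : ℝ) : cexp (-v ^ 2) = (Real.exp (-v ^ 2) : ℝ) := by push_cast; rfl
  have hvalue : ∫ v : ℝ, f (l * I) * cexp (-v ^ 2) = Real.sqrt Real.pi * f (l * I) := by
    simp_rw [hgauss]
    rw [integral_const_mul, mul_comm, integral_complex_ofReal]
    simpa using Or.inl (integral_gaussian 1)
  rw [← hvalue]
  refine tendsto_integral_filter_of_dominated_convergence
    (fun v ↦ A * Real.exp (c * l ^ 2) * Real.exp (-(1 / 2) * v ^ 2)) ?_ ?_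
    ((integrable_exp_neg_mul_sq one_half_pos).const_mul _) ?_
  · refine Eventually.of_forall fun s ↦ Continuous.aestronglyMeasurable ?_
    exact (hcont.comp (by fun_prop : Continuous fun v : ℝ ↦ (s, v))).mul (by fun_prop)
  · filter_upwards [eventually_mul_sq_le_half c] with s hs
    refine ae_of_all _ fun v ↦ ?_
    rw [norm_mul, hgauss, norm_real, Real.norm_of_nonneg (Real.exp_pos _).le]
    exact norm_mul_exp_neg_sq_le_of_growth hf hs hl
  · refine ae_of_all _ fun v ↦ Tendsto.mul_const _ ?_
    refine Tendsto.mono_left ?_ nhdsWithin_le_nhds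
    exact (hcont.comp (by fun_prop : Continuous fun s : ℝ ↦ (s, v))).tendsto' 0 _ (by simp)

lemma tendsto_integral_exp_sub_sq {μ : Measure ℝ} [IsFiniteMeasure μ]
    (hc : ContinuousOn f {z | 0 ≤ z.im}) (hd : DifferentiableOn ℂ f {z | 0 < z.im})
    (hf : ∀ z : ℂ, 0 ≤ z.im → ‖f z‖ ≤ A * Real.exp (c * ‖z‖ ^ 2))
    (hμ : ∀ u : ℝ, charFun μ u = f u) (hl : 0 ≤ l) :
    Tendsto (fun s : ℝ ↦ ∫ x, Real.exp (-(l * x) - (s * x) ^ 2 / 4) ∂μ) (𝓝[>] 0)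
      (𝓝 (f (l * I)).re) := by
  have hpi : (Real.sqrt Real.pi : ℂ) ≠ 0 := mod_cast (Real.sqrt_pos.2 Real.pi_pos).ne'
  have hlim := (tendsto_integral_mul_gaussian hc hf hl).const_mul (Real.sqrt Real.pi : ℂ)⁻¹
  rw [inv_mul_cancel_left₀ hpi] at hlim
  refine ((continuous_re.tendsto _).comp hlim).congr' ?_
  filter_upwards [self_mem_nhdsWithin, eventually_mul_sq_le_half c] with s hs hcs
  have hgauss := integral_charFun_mul_gaussian (l := l) μ (ne_of_gt hs)
  simp_rw [hμ] at hgauss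
  push_cast at hgauss
  rw [Function.comp_apply, ← integral_mul_gaussian_shift hc hd hf hl hs hcs, ofReal_div, hgauss,
    inv_mul_cancel_left₀ hpi, ofReal_re]

theorem integrable_exp_and_integral_exp_eq_of_charFun_eq {μ : Measure ℝ} [IsFiniteMeasure μ]
    (hc : ContinuousOn f {z | 0 ≤ z.im}) (hd : DifferentiableOn ℂ f {z | 0 < z.im})
    (hf : ∀ z : ℂ, 0 ≤ z.im → ‖f z‖ ≤ A * Real.exp (c * ‖z‖ ^ 2))
    (hμ : ∀ u : ℝ, charFun μ u = f u) (hl : 0 ≤ l) :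
    Integrable (fun x ↦ Real.exp (-(l * x))) μ ∧
      ∫ x, Real.exp (-(l * x)) ∂μ = (f (l * I)).re := by
  have hseq : Tendsto (fun n : ℕ ↦ 1 / ((n : ℝ) + 1)) atTop (𝓝[>] 0) :=
    tendsto_nhdsWithin_iff.2 ⟨tendsto_one_div_add_atTop_nhds_zero_nat,
      Eventually.of_forall fun n ↦ mem_Ioi.2 Nat.one_div_pos_of_nat⟩
  refine integrable_and_integral_eq_of_monotone
    (g := fun n x ↦ Real.exp (-(l * x) - (1 / ((n : ℝ) + 1) * x) ^ 2 / 4)) (fun n ↦ ?_)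
    (ae_of_all _ fun x m n hmn ↦ ?_) (ae_of_all _ fun x ↦ ?_)
    ((tendsto_integral_exp_sub_sq hc hd hf hμ hl).comp hseq)
  · set s := 1 / ((n : ℝ) + 1)
    have hs : 0 < s := Nat.one_div_pos_of_nat
    refine Integrable.of_bound (by fun_prop) (Real.exp ((l / s) ^ 2)) (ae_of_all _ fun x ↦ ?_)
    rw [Real.norm_of_nonneg (Real.exp_pos _).le, Real.exp_le_exp]
    have hsquare : (l / s + s * x / 2) ^ 2 = (l / s) ^ 2 + l * x + (s * x) ^ 2 / 4 := by
      field_simp; ring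
    linarith [sq_nonneg (l / s + s * x / 2)]
  · have h := Nat.one_div_le_one_div (α := ℝ) hmn
    simp only [mul_pow]
    gcongr
  · have hcont : Continuous fun s : ℝ ↦ Real.exp (-(l * x) - (s * x) ^ 2 / 4) := by fun_prop
    exact (hcont.tendsto' 0 _ (by simp)).comp (hseq.mono_right nhdsWithin_le_nhds)

end LaplaceTransform

section StableLaw

open Complex

variable {Y K : ℝ}

lemma log_neg_I_mul_ofReal {u : ℝ} (hu : u ≠ 0) :
    log (-I * u) = Real.log |u| - (Real.sign u * (Real.pi / 2) : ℝ) * I := by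
  rcases hu.lt_or_gt with h | h
  · rw [show -I * u = (-u : ℝ) * I by push_cast; ring, log_ofReal_mul (neg_pos.2 h) I_ne_zero,
      log_I, Real.sign_of_neg h, abs_of_neg h]
    push_cast; ring
  · rw [mul_comm, log_ofReal_mul h (neg_ne_zero.2 I_ne_zero), log_neg_I, Real.sign_of_pos h,
      abs_of_pos h]
    push_cast; ring

lemma cpow_neg_I_mul_ofReal (hY : Y ≠ 0) (u : ℝ) :
    (-I * u) ^ (Y : ℂ) = ((|u| ^ Y : ℝ) : ℂ) * (((Real.cos (Real.pi * Y / 2) : ℝ) : ℂ)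
      - I * ((Real.sign u : ℝ) : ℂ) * ((Real.sin (Real.pi * Y / 2) : ℝ) : ℂ)) := by
  rcases eq_or_ne u 0 with rfl | hu
  · simp [hY]
  have hsign : Real.cos (-(Real.sign u * (Real.pi * Y / 2))) = Real.cos (Real.pi * Y / 2) ∧
      Real.sin (-(Real.sign u * (Real.pi * Y / 2))) =
        -(Real.sign u * Real.sin (Real.pi * Y / 2)) := by
    rcases Real.sign_apply_eq_of_ne_zero u hu with h | h <;> simp [h]
  have hexponent : (Real.log |u| - (Real.sign u * (Real.pi / 2) : ℝ) * I) * Y =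
      (Real.log |u| * Y : ℝ) + (-(Real.sign u * (Real.pi * Y / 2)) : ℝ) * I := by
    push_cast; ring
  rw [cpow_def_of_ne_zero (mul_ne_zero (neg_ne_zero.2 I_ne_zero) (ofReal_ne_zero.2 hu)),
    log_neg_I_mul_ofReal hu, hexponent, Complex.exp_add, ← ofReal_exp,
    ← Real.rpow_def_of_pos (abs_pos.2 hu), exp_mul_I, ← ofReal_cos, ← ofReal_sin, hsign.1, hsign.2]
  push_cast; ring

lemma rpow_le_one_add_sq {x : ℝ} (hx : 0 ≤ x) (hY : Y ∈ Ioo 0 2) : x ^ Y ≤ 1 + x ^ 2 := by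
  rcases le_total x 1 with h | h
  · linarith [Real.rpow_le_one hx h hY.1.le, sq_nonneg x]
  · have := Real.rpow_le_rpow_of_exponent_le h hY.2.le
    rw [Real.rpow_two] at this
    linarith

theorem integrable_exp_and_integral_exp_eq_of_stable {μ : Measure ℝ} [IsFiniteMeasure μ]
    (hY : Y ∈ Ioo 0 2) (hμ : ∀ u : ℝ, charFun μ u = cexp (K * (-I * u) ^ (Y : ℂ)))
    {l : ℝ} (hl : 0 ≤ l) :
    Integrable (fun x ↦ Real.exp (-(l * x))) μ ∧
      ∫ x, Real.exp (-(l * x)) ∂μ = Real.exp (K * l ^ Y) := by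
  have hre (z : ℂ) : (-I * z).re = z.im := by simp
  have hval : (cexp (K * (-I * (l * I)) ^ (Y : ℂ))).re = Real.exp (K * l ^ Y) := by
    rw [show -I * (l * I) = l by linear_combination (-l : ℂ) * I_sq, ← ofReal_cpow hl,
      ← ofReal_mul, ← ofReal_exp, ofReal_re]
  rw [← hval]
  refine integrable_exp_and_integral_exp_eq_of_charFun_eq
    (f := fun z ↦ cexp (K * (-I * z) ^ (Y : ℂ))) (A := Real.exp |K|) (c := |K|)
    ?_ ?_ (fun z _ ↦ ?_) hμ hl
  · refine (continuousOn_const.mul fun z hz ↦ ?_).cexp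
    exact ((continuousAt_cpow_const_of_re_pos (Or.inl ((hre z).symm ▸ hz))
      (by simpa using hY.1)).comp (by fun_prop)).continuousWithinAt
  · refine (DifferentiableOn.const_mul (fun z hz ↦ ?_) _).cexp
    exact (DifferentiableAt.cpow_const (by fun_prop)
      (Or.inl ((hre z).symm ▸ hz))).differentiableWithinAt
  · rw [← Real.exp_add]
    refine (norm_exp_le_exp_norm _).trans (Real.exp_le_exp.2 ?_)
    rw [norm_mul, norm_real, Real.norm_eq_abs, norm_cpow_real, norm_mul, norm_neg, norm_I, one_mul]
    nlinarith [mul_le_mul_of_nonneg_left (rpow_le_one_add_sq (norm_nonneg z) hY) (abs_nonneg K)]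

end StableLaw

section Mean

lemma antitoneOn_one_sub_exp_div (x : ℝ) :
    AntitoneOn (fun l ↦ (1 - Real.exp (-(l * x))) / l) (Ioi 0) := by
  intro l hl k hk hlk
  have hl : 0 < l := hl
  have hk : 0 < k := hk
  have hconv := convexOn_exp.2 (mem_univ 0) (mem_univ (-(k * x)))
    (sub_nonneg.2 ((div_le_one hk).2 hlk)) (by positivity : 0 ≤ l / k) (by ring)
  simp only [smul_eq_mul, mul_zero, zero_add, Real.exp_zero, mul_one] at hconv
  rw [show l / k * -(k * x) = -(l * x) by field_simp] at hconv
  refine (div_le_div_iff₀ hk hl).2 ?_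
  have hscaled := mul_le_mul_of_nonneg_left hconv hk.le
  rw [show k * (1 - l / k + l / k * Real.exp (-(k * x))) = k - l + l * Real.exp (-(k * x)) by
    field_simp] at hscaled
  linarith

lemma tendsto_one_sub_exp_div (x : ℝ) :
    Tendsto (fun l ↦ (1 - Real.exp (-(l * x))) / l) (𝓝[>] 0) (𝓝 x) := by
  have hderiv : HasDerivAt (fun l ↦ 1 - Real.exp (-(l * x))) x 0 := by
    simpa using (((hasDerivAt_id (0 : ℝ)).mul_const x).neg.exp).const_sub 1
  simpa [div_eq_inv_mul] using hderiv.tendsto_slope_zero_right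

theorem integrable_id_and_integral_eq_of_laplace {μ : Measure ℝ} [IsFiniteMeasure μ] {m : ℝ}
    (hexp : ∀ l, 0 < l → Integrable (fun x ↦ Real.exp (-(l * x))) μ)
    (hm : Tendsto (fun l ↦ ∫ x, (1 - Real.exp (-(l * x))) / l ∂μ) (𝓝[>] 0) (𝓝 m)) :
    Integrable (fun x ↦ x) μ ∧ ∫ x, x ∂μ = m := by
  have hpos (n : ℕ) : 0 < 1 / ((n : ℝ) + 1) := Nat.one_div_pos_of_nat
  have hseq : Tendsto (fun n : ℕ ↦ 1 / ((n : ℝ) + 1)) atTop (𝓝[>] 0) :=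
    tendsto_nhdsWithin_iff.2 ⟨tendsto_one_div_add_atTop_nhds_zero_nat, Eventually.of_forall hpos⟩
  exact integrable_and_integral_eq_of_monotone
    (fun n ↦ ((integrable_const 1).sub (hexp _ (hpos n))).div_const _)
    (ae_of_all _ fun x n k hnk ↦
      antitoneOn_one_sub_exp_div x (hpos k) (hpos n) (Nat.one_div_le_one_div hnk))
    (ae_of_all _ fun x ↦ (tendsto_one_sub_exp_div x).comp hseq) (hm.comp hseq)

end Mean

section CompensatedExponential

/-- The compensated exponential `e⁻ˣ - 1 + x`, whose mean under a centred law is the Laplace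
transform of that law minus one. -/
noncomputable def compExp (x : ℝ) : ℝ := Real.exp (-x) - 1 + x

/-- The compensated exponential of the positive part, i.e. the primitive of `1 - e⁻ˣ` on the
positive half-line, extended by zero to the negative half-line. -/
noncomputable def compExpPos (x : ℝ) : ℝ := compExp (max x 0)

variable {x y : ℝ}

@[fun_prop]
lemma continuous_compExp : Continuous compExp := by unfold compExp; fun_prop

@[fun_prop]
lemma continuous_compExpPos : Continuous compExpPos := by unfold compExpPos; fun_prop

lemma compExp_nonneg (x : ℝ) : 0 ≤ compExp x := by
  unfold compExp; linarith [Real.add_one_le_exp (-x)]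

lemma compExp_le_mul_one_sub_exp (x : ℝ) : compExp x ≤ x * (1 - Real.exp (-x)) := by
  have h : (x + 1) * Real.exp (-x) ≤ Real.exp x * Real.exp (-x) := by
    gcongr; exact Real.add_one_le_exp x
  rw [← Real.exp_add, add_neg_cancel, Real.exp_zero] at h
  unfold compExp
  linarith

lemma hasDerivAt_compExp (x : ℝ) : HasDerivAt compExp (1 - Real.exp (-x)) x :=
  (((hasDerivAt_neg x).exp.sub_const 1).add (hasDerivAt_id' x)).congr_deriv (by ring)

lemma integral_one_sub_exp (a b : ℝ) :
    ∫ x in a..b, (1 - Real.exp (-x)) = compExp b - compExp a :=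
  intervalIntegral.integral_eq_sub_of_hasDerivAt (fun x _ ↦ hasDerivAt_compExp x)
    (Continuous.intervalIntegrable (by fun_prop) _ _)

lemma compExpPos_nonneg (x : ℝ) : 0 ≤ compExpPos x := compExp_nonneg _

lemma compExpPos_of_nonneg (hx : 0 ≤ x) : compExpPos x = compExp x := by
  rw [compExpPos, max_eq_left hx]

lemma compExpPos_of_nonpos (hx : x ≤ 0) : compExpPos x = 0 := by
  simp [compExpPos, max_eq_right hx, compExp]

lemma compExpPos_mono : Monotone compExpPos := by
  intro x y hxy
  have hle : max x 0 ≤ max y 0 := max_le_max_right 0 hxy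
  refine sub_nonneg.1 ?_
  rw [compExpPos, compExpPos, ← integral_one_sub_exp]
  refine intervalIntegral.integral_nonneg hle fun z hz ↦ ?_
  have : 0 ≤ z := (le_max_right x 0).trans hz.1
  simpa using this

lemma compExpPos_sub_le (hxy : x ≤ y) : compExpPos y - compExpPos x ≤ y - x := by
  have hmax : max y 0 - max x 0 ≤ y - x := by
    rcases max_cases x 0 with ⟨h, _⟩ | ⟨h, _⟩ <;> rcases max_cases y 0 with ⟨h', _⟩ | ⟨h', _⟩ <;>
      rw [h, h'] <;> linarith
  have hexp : Real.exp (-max y 0) ≤ Real.exp (-max x 0) :=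
    Real.exp_le_exp.2 (neg_le_neg (max_le_max_right 0 hxy))
  unfold compExpPos compExp
  linarith

lemma abs_compExpPos_sub_le (x y : ℝ) : |compExpPos x - compExpPos y| ≤ |x - y| := by
  wlog h : x ≤ y generalizing x y
  · rw [abs_sub_comm, abs_sub_comm x]; exact this y x (le_of_not_ge h)
  · rw [abs_sub_comm, abs_sub_comm x, abs_of_nonneg (sub_nonneg.2 (compExpPos_mono h)),
      abs_of_nonneg (sub_nonneg.2 h)]
    exact compExpPos_sub_le h

lemma compExpPos_le_abs (x : ℝ) : compExpPos x ≤ |x| := by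
  simpa [compExpPos_of_nonpos le_rfl, abs_of_nonneg (compExpPos_nonneg x)] using
    abs_compExpPos_sub_le x 0

lemma compExpPos_le_sq (x : ℝ) : compExpPos x ≤ x ^ 2 := by
  rcases le_total x 0 with hx | hx
  · rw [compExpPos_of_nonpos hx]; positivity
  · rw [compExpPos_of_nonneg hx]
    nlinarith [compExp_le_mul_one_sub_exp x, Real.add_one_le_exp (-x)]

lemma sq_div_four_le_compExpPos (hx : 0 ≤ x) (hx₁ : x ≤ 1) : x ^ 2 / 4 ≤ compExpPos x := by
  have hhalf : Real.exp (-x) = Real.exp (-(x / 2)) ^ 2 := by rw [← Real.exp_nat_mul]; ring_nf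
  rw [compExpPos_of_nonneg hx, compExp, hhalf]
  nlinarith [Real.add_one_le_exp (-(x / 2))]

lemma integrable_compExpPos_mul {Ω : Type*} [MeasurableSpace Ω] {P : Measure Ω} {U : Ω → ℝ}
    (hU : Integrable U P) (r : ℝ) : Integrable (fun ω ↦ compExpPos (r * U ω)) P := by
  refine (hU.const_mul r).mono
    (continuous_compExpPos.comp_aestronglyMeasurable (hU.const_mul r).aestronglyMeasurable)
    (ae_of_all _ fun ω ↦ ?_)
  rw [Real.norm_of_nonneg (compExpPos_nonneg _)]
  exact compExpPos_le_abs _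

lemma compExpPos_le_compExp (x : ℝ) : compExpPos x ≤ compExp x := by
  rcases le_total x 0 with hx | hx
  · rw [compExpPos_of_nonpos hx]; exact compExp_nonneg x
  · exact (compExpPos_of_nonneg hx).le

lemma compExp_sub_compExpPos_le {r : ℝ} (hr : 0 ≤ r) (hr₁ : r ≤ 1) (x : ℝ) :
    compExp (r * x) - compExpPos (r * x) ≤ 2 * r ^ 2 * Real.exp (-(2 * x)) := by
  rcases le_total 0 x with hx | hx
  · rw [compExpPos_of_nonneg (mul_nonneg hr hx), sub_self]; positivity
  have hrx : r * x ≤ 0 := mul_nonpos_of_nonneg_of_nonpos hr hx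
  have hsq : x ^ 2 ≤ 2 * Real.exp (-x) := by
    have := Real.quadratic_le_exp_of_nonneg (neg_nonneg.2 hx)
    nlinarith
  have hdiff : r * x * Real.exp (-(r * x)) ≤ 1 - Real.exp (-(r * x)) := by
    have := compExp_le_mul_one_sub_exp (r * x)
    unfold compExp at this
    linarith
  rw [compExpPos_of_nonpos hrx, sub_zero]
  calc compExp (r * x) ≤ r * x * (1 - Real.exp (-(r * x))) := compExp_le_mul_one_sub_exp _
    _ ≤ r * x * (r * x * Real.exp (-(r * x))) := mul_le_mul_of_nonpos_left hdiff hrx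
    _ = r ^ 2 * x ^ 2 * Real.exp (-(r * x)) := by ring
    _ ≤ r ^ 2 * (2 * Real.exp (-x)) * Real.exp (-x) := by
        gcongr
        nlinarith
    _ = 2 * r ^ 2 * Real.exp (-(2 * x)) := by
        rw [mul_assoc, mul_assoc, ← Real.exp_add]; ring_nf

end CompensatedExponential

section SmallScale

variable {Y K : ℝ}

lemma tendsto_rpow_nhdsGT_zero_s16 (hY : 0 < Y) : Tendsto (fun r : ℝ ↦ r ^ Y) (𝓝[>] 0) (𝓝[>] 0) := by
  refine tendsto_nhdsWithin_iff.2 ⟨?_, eventually_mem_nhdsWithin.mono fun r hr ↦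
    Real.rpow_pos_of_pos hr _⟩
  simpa [hY.ne'] using
    (Real.continuousAt_rpow_const 0 Y (Or.inr hY.le)).tendsto.mono_left nhdsWithin_le_nhds

lemma rpow_one_div_rpow_neg {t : ℝ} (ht : 0 ≤ t) (hY : Y ≠ 0) : (t ^ (1 / Y)) ^ (-Y) = t⁻¹ := by
  rw [← Real.rpow_mul ht, one_div, mul_neg, inv_mul_cancel₀ hY, Real.rpow_neg_one]

lemma tendsto_rpow_neg_mul_exp_sub_one (hY : 0 < Y) :
    Tendsto (fun r : ℝ ↦ r ^ (-Y) * (Real.exp (K * r ^ Y) - 1)) (𝓝[>] 0) (𝓝 K) := by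
  have hderiv : HasDerivAt (fun x ↦ Real.exp (K * x)) K 0 := by
    simpa using ((hasDerivAt_id (0 : ℝ)).const_mul K).exp
  have hslope := hderiv.tendsto_slope_zero_right.comp (tendsto_rpow_nhdsGT_zero_s16 hY)
  refine hslope.congr' (eventually_mem_nhdsWithin.mono fun r hr ↦ ?_)
  simp [Real.rpow_neg (le_of_lt hr)]

variable {μ : Measure ℝ} [IsProbabilityMeasure μ]

theorem integrable_id_and_integral_eq_zero_of_laplace (hY : 1 < Y)
    (hexp : ∀ l, 0 < l → Integrable (fun x ↦ Real.exp (-(l * x))) μ)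
    (hlaplace : ∀ l, 0 < l → ∫ x, Real.exp (-(l * x)) ∂μ = Real.exp (K * l ^ Y)) :
    Integrable (fun x ↦ x) μ ∧ ∫ x, x ∂μ = 0 := by
  refine integrable_id_and_integral_eq_of_laplace hexp ?_
  have hlim := ((tendsto_rpow_neg_mul_exp_sub_one (K := K) (zero_lt_one.trans hY)).mul
    ((tendsto_rpow_nhdsGT_zero_s16 (sub_pos.2 hY)).mono_right nhdsWithin_le_nhds)).neg
  rw [mul_zero, neg_zero] at hlim
  refine hlim.congr' (eventually_mem_nhdsWithin.mono fun l (hl : 0 < l) ↦ ?_)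
  simp only
  rw [integral_div, integral_sub (integrable_const 1) (hexp l hl), hlaplace l hl,
    integral_const, probReal_univ, one_smul, Real.rpow_sub hl, Real.rpow_one, Real.rpow_neg hl.le]
  field_simp
  ring

theorem integral_compExp_mul {r : ℝ} (hid : Integrable (fun x ↦ x) μ) (hmean : ∫ x, x ∂μ = 0)
    (hexp : Integrable (fun x ↦ Real.exp (-(r * x))) μ) :
    ∫ x, compExp (r * x) ∂μ = ∫ x, Real.exp (-(r * x)) ∂μ - 1 := by
  have hsub : Integrable (fun x ↦ Real.exp (-(r * x)) - 1) μ := hexp.sub (integrable_const 1)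
  simp_rw [compExp]
  rw [integral_add hsub (hid.const_mul r),
    integral_sub hexp (integrable_const 1), integral_const_mul, hmean]
  simp

theorem tendsto_integral_compExpPos_mul (hY : Y ∈ Ioo 1 2)
    (hexp : ∀ l, 0 < l → Integrable (fun x ↦ Real.exp (-(l * x))) μ)
    (hlaplace : ∀ l, 0 < l → ∫ x, Real.exp (-(l * x)) ∂μ = Real.exp (K * l ^ Y)) :
    Tendsto (fun r : ℝ ↦ r ^ (-Y) * ∫ x, compExpPos (r * x) ∂μ) (𝓝[>] 0) (𝓝 K) := by
  obtain ⟨hid, hmean⟩ := integrable_id_and_integral_eq_zero_of_laplace hY.1 hexp hlaplace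
  have hmain := tendsto_rpow_neg_mul_exp_sub_one (K := K) (zero_lt_one.trans hY.1)
  have herror : Tendsto (fun r : ℝ ↦ r ^ (2 - Y) * (2 * ∫ x, Real.exp (-(2 * x)) ∂μ))
      (𝓝[>] 0) (𝓝 0) := by
    simpa using ((tendsto_rpow_nhdsGT_zero_s16 (sub_pos.2 hY.2)).mono_right
      nhdsWithin_le_nhds).mul_const (2 * ∫ x, Real.exp (-(2 * x)) ∂μ)
  have hcompExp {r : ℝ} (hr : 0 < r) : Integrable (fun x ↦ compExp (r * x)) μ :=
    ((hexp r hr).sub (integrable_const 1)).add (hid.const_mul r)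
  have hint {r : ℝ} (hr : 0 < r) : ∫ x, compExp (r * x) ∂μ = Real.exp (K * r ^ Y) - 1 := by
    rw [integral_compExp_mul hid hmean (hexp r hr), hlaplace r hr]
  refine tendsto_of_tendsto_of_tendsto_of_le_of_le' (by simpa using hmain.sub herror) hmain ?_ ?_
  · filter_upwards [Ioo_mem_nhdsGT one_pos] with r ⟨hr, hr₁⟩
    have hle : ∫ x, compExp (r * x) ∂μ - ∫ x, compExpPos (r * x) ∂μ ≤
        2 * r ^ 2 * ∫ x, Real.exp (-(2 * x)) ∂μ := by
      rw [← integral_sub (hcompExp hr) (integrable_compExpPos_mul hid r), ← integral_const_mul]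
      exact integral_mono ((hcompExp hr).sub (integrable_compExpPos_mul hid r))
        ((hexp 2 two_pos).const_mul _) (compExp_sub_compExpPos_le hr.le hr₁.le)
    have hpow : r ^ (2 - Y) = r ^ (-Y) * r ^ 2 := by
      rw [sub_eq_neg_add, Real.rpow_add hr, Real.rpow_two]
    rw [hint hr] at hle
    have := mul_le_mul_of_nonneg_left hle (Real.rpow_nonneg hr.le (-Y))
    rw [hpow]
    linarith
  · filter_upwards [self_mem_nhdsWithin] with r hr
    rw [← hint hr]
    exact mul_le_mul_of_nonneg_left (integral_mono (integrable_compExpPos_mul hid r) (hcompExp hr)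
      fun x ↦ compExpPos_le_compExp _) (Real.rpow_nonneg (le_of_lt hr) _)

end SmallScale

section WindowGain

/-- The integral of `1 - e⁻ˣ` over the positive part of the window
`[(M - 1)u + (G + 1)v, Mu + Gv]`, on the event `s ≤ u - v`. The window has length `u - v`, so
its endpoints are in order as soon as `0 ≤ s`. -/
noncomputable def windowGain (M G s u v : ℝ) : ℝ :=
  if s ≤ u - v then compExpPos (M * u + G * v) - compExpPos ((M - 1) * u + (G + 1) * v) else 0

variable {M G s u v δ : ℝ}

lemma measurable_windowGain (M G : ℝ) :
    Measurable fun z : ℝ × ℝ × ℝ ↦ windowGain M G z.1 z.2.1 z.2.2 := by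
  have hφ : Measurable compExpPos := continuous_compExpPos.measurable
  unfold windowGain
  exact Measurable.ite (measurableSet_le (by fun_prop) (by fun_prop)) (by fun_prop)
    measurable_const

lemma windowGain_nonneg (hs : 0 ≤ s) (u v : ℝ) : 0 ≤ windowGain M G s u v := by
  unfold windowGain
  split_ifs with h
  · exact sub_nonneg.2 (compExpPos_mono (by linarith))
  · exact le_rfl

lemma windowGain_le (hG : 0 ≤ G) (hs : 0 ≤ s) (u v : ℝ) :
    windowGain M G s u v ≤ compExpPos ((M + G) * u) := by
  unfold windowGain
  split_ifs with h
  · have hle : compExpPos (M * u + G * v) ≤ compExpPos ((M + G) * u) :=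
      compExpPos_mono (by nlinarith)
    linarith [compExpPos_nonneg ((M - 1) * u + (G + 1) * v)]
  · exact compExpPos_nonneg _

lemma compExpPos_mul_sub_mem_Icc (hM : 1 ≤ M) (hG : 0 ≤ G) (u : ℝ) :
    compExpPos (M * u) - compExpPos ((M - 1) * u) ∈ Icc 0 (compExpPos ((M + G) * u)) := by
  rcases le_total u 0 with hu | hu
  · rw [compExpPos_of_nonpos (by nlinarith : M * u ≤ 0),
      compExpPos_of_nonpos (by nlinarith : (M - 1) * u ≤ 0), sub_zero]
    exact ⟨le_rfl, compExpPos_nonneg _⟩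
  · have hle : compExpPos ((M - 1) * u) ≤ compExpPos (M * u) := compExpPos_mono (by nlinarith)
    have hle' : compExpPos (M * u) ≤ compExpPos ((M + G) * u) := compExpPos_mono (by nlinarith)
    exact ⟨sub_nonneg.2 hle, by linarith [compExpPos_nonneg ((M - 1) * u)]⟩

lemma abs_windowGain_sub_le_compExpPos (hM : 1 ≤ M) (hG : 0 ≤ G) (hs : 0 ≤ s) (u v : ℝ) :
    |windowGain M G s u v - (compExpPos (M * u) - compExpPos ((M - 1) * u))| ≤
      compExpPos ((M + G) * u) := by
  have hk := compExpPos_mul_sub_mem_Icc hM hG u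
  exact abs_sub_le_of_nonneg_of_le (windowGain_nonneg hs u v) (windowGain_le hG hs u v) hk.1 hk.2

lemma abs_windowGain_sub_le_mul_abs (hG : 0 ≤ G) (h : s ≤ u - v) :
    |windowGain M G s u v - (compExpPos (M * u) - compExpPos ((M - 1) * u))| ≤
      (2 * G + 1) * |v| := by
  have hupper := abs_compExpPos_sub_le (M * u + G * v) (M * u)
  have hlower := abs_compExpPos_sub_le ((M - 1) * u) ((M - 1) * u + (G + 1) * v)
  rw [add_sub_cancel_left, abs_mul, abs_of_nonneg hG] at hupper
  rw [sub_add_cancel_left, abs_neg, abs_mul, abs_of_nonneg (by linarith : 0 ≤ G + 1)] at hlower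
  rw [windowGain, if_pos h, sub_sub_sub_comm, ← neg_sub (compExpPos ((M - 1) * u)), sub_neg_eq_add]
  linarith [abs_add_le (compExpPos (M * u + G * v) - compExpPos (M * u))
    (compExpPos ((M - 1) * u) - compExpPos ((M - 1) * u + (G + 1) * v))]

-- For `u ≤ δ` both sides are quadratically small in `u`; for `u > δ` and `|v| ≤ δ²` the event
-- `s ≤ u - v` holds automatically.
lemma abs_windowGain_sub_le (hM : 1 ≤ M) (hG : 0 ≤ G) (hs : 0 ≤ s) (hδ : 0 < δ)
    (h : δ ^ 2 + s ≤ δ) (u v : ℝ) :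
    |windowGain M G s u v - (compExpPos (M * u) - compExpPos ((M - 1) * u))| ≤
      4 * ((M + G) ^ 2 + (2 * G + 1)) * δ ^ 2 * compExpPos (δ⁻¹ * u) +
        compExpPos ((M + G) * u) * {v | δ ^ 2 < |v|}.indicator 1 v := by
  have hcrude := abs_windowGain_sub_le_compExpPos hM hG hs u v
  have hφ := compExpPos_nonneg (δ⁻¹ * u)
  by_cases hv : v ∈ {v | δ ^ 2 < |v|}
  · rw [indicator_of_mem hv, Pi.one_apply, mul_one]
    exact hcrude.trans (le_add_of_nonneg_left (by positivity))
  rw [indicator_of_notMem hv, mul_zero, add_zero]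
  rcases le_or_gt u 0 with hu₀ | hu₀
  · rw [compExpPos_of_nonpos (by nlinarith : (M + G) * u ≤ 0)] at hcrude
    exact hcrude.trans (by positivity)
  rcases le_or_gt u δ with hu | hu
  · have hsq := sq_div_four_le_compExpPos (x := δ⁻¹ * u) (by positivity)
      (by rwa [inv_mul_le_iff₀ hδ, mul_one])
    calc _ ≤ ((M + G) * u) ^ 2 := hcrude.trans (compExpPos_le_sq _)
      _ = 4 * (M + G) ^ 2 * δ ^ 2 * ((δ⁻¹ * u) ^ 2 / 4) := by field_simp
      _ ≤ 4 * ((M + G) ^ 2 + (2 * G + 1)) * δ ^ 2 * compExpPos (δ⁻¹ * u) := by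
        gcongr
        linarith
  · have hone : 1 / 4 ≤ compExpPos (δ⁻¹ * u) :=
      calc 1 / 4 = 1 ^ 2 / 4 := by norm_num
        _ ≤ compExpPos 1 := sq_div_four_le_compExpPos zero_le_one le_rfl
        _ ≤ compExpPos (δ⁻¹ * u) :=
          compExpPos_mono (by rw [le_inv_mul_iff₀ hδ, mul_one]; exact hu.le)
    have hv : |v| ≤ δ ^ 2 := not_lt.1 hv
    have hs' : s ≤ u - v := by linarith [le_abs_self v]
    have hconst : 2 * G + 1 ≤ (M + G) ^ 2 + (2 * G + 1) := by linarith [sq_nonneg (M + G)]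
    calc _ ≤ (2 * G + 1) * |v| := abs_windowGain_sub_le_mul_abs hG hs'
      _ ≤ (2 * G + 1) * δ ^ 2 := by gcongr
      _ = 4 * (2 * G + 1) * δ ^ 2 * (1 / 4) := by ring
      _ ≤ 4 * ((M + G) ^ 2 + (2 * G + 1)) * δ ^ 2 * compExpPos (δ⁻¹ * u) := by
        gcongr

variable {Ω : Type*} [MeasurableSpace Ω] {P : Measure Ω} {U V : Ω → ℝ}

lemma integrable_windowGain (hU : Integrable U P) (hV : AEMeasurable V P) (hG : 0 ≤ G)
    (hs : 0 ≤ s) : Integrable (fun ω ↦ windowGain M G s (U ω) (V ω)) P := by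
  refine (integrable_compExpPos_mul hU (M + G)).mono' ?_ (ae_of_all _ fun ω ↦ ?_)
  · exact ((measurable_windowGain M G).comp_aemeasurable
      (aemeasurable_const.prodMk (hU.aemeasurable.prodMk hV))).aestronglyMeasurable
  · rw [Real.norm_of_nonneg (windowGain_nonneg hs _ _)]
    exact windowGain_le hG hs _ _

theorem abs_integral_windowGain_sub_le [IsFiniteMeasure P] (hU : Integrable U P)
    (hV : Measurable V) (hUV : IndepFun U V P) (hM : 1 ≤ M) (hG : 0 ≤ G) (hs : 0 ≤ s)
    (hδ : 0 < δ) (h : δ ^ 2 + s ≤ δ) :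
    |∫ ω, windowGain M G s (U ω) (V ω) ∂P -
        (∫ ω, compExpPos (M * U ω) ∂P - ∫ ω, compExpPos ((M - 1) * U ω) ∂P)| ≤
      4 * ((M + G) ^ 2 + (2 * G + 1)) * δ ^ 2 * ∫ ω, compExpPos (δ⁻¹ * U ω) ∂P +
        (∫ ω, compExpPos ((M + G) * U ω) ∂P) * P.real {ω | δ ^ 2 < |V ω|} := by
  have hφ (c : ℝ) : Integrable (fun ω ↦ compExpPos (c * U ω)) P := integrable_compExpPos_mul hU c
  have htail : MeasurableSet {v : ℝ | δ ^ 2 < |v|} := measurableSet_lt (by fun_prop) (by fun_prop)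
  let T : ℝ → ℝ := {v | δ ^ 2 < |v|}.indicator 1
  have hT : Integrable (fun ω ↦ T (V ω)) P :=
    (integrable_const (1 : ℝ)).indicator (hV htail)
  have hTint : ∫ ω, T (V ω) ∂P = P.real {ω | δ ^ 2 < |V ω|} := integral_indicator_one (hV htail)
  have hindep : IndepFun (fun ω ↦ compExpPos ((M + G) * U ω)) (fun ω ↦ T (V ω)) P :=
    hUV.comp (continuous_compExpPos.comp (by fun_prop)).measurable
      (measurable_one.indicator htail)
  have hφT : Integrable (fun ω ↦ compExpPos ((M + G) * U ω) * T (V ω)) P :=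
    hindep.integrable_mul (hφ _) hT
  have hgain := integrable_windowGain (M := M) hU hV.aemeasurable hG hs
  have hlimit : Integrable (fun ω ↦ compExpPos (M * U ω) - compExpPos ((M - 1) * U ω)) P :=
    (hφ _).sub (hφ _)
  rw [← integral_sub (hφ _) (hφ _), ← integral_sub hgain hlimit, ← hTint,
    ← hindep.integral_fun_mul_eq_mul_integral (hφ _).1 hT.1, ← integral_const_mul,
    ← integral_add ((hφ _).const_mul _) hφT]
  exact abs_integral_le_integral_abs.trans (integral_mono (hgain.sub hlimit).abs
    (((hφ _).const_mul _).add hφT) fun ω ↦ abs_windowGain_sub_le hM hG hs hδ h _ _)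

end WindowGain

section BigJump

variable {Ω : Type*} [MeasurableSpace Ω] {P : Measure Ω} {U V : Ω → ℝ} {Y K M G : ℝ}

lemma tendsto_measureReal_lt_abs_mul [IsFiniteMeasure P] (hV : Measurable V) {a : ℝ}
    (ha : 0 < a) : Tendsto (fun r : ℝ ↦ P.real {ω | a < |r * V ω|}) (𝓝 0) (𝓝 0) := by
  have hlim : Tendsto (fun r : ℝ ↦ P {ω | a < |r * V ω|}) (𝓝 0) (𝓝 (P ∅)) := by
    refine tendsto_measure_of_tendsto_indicator_of_isFiniteMeasure _ P
      (fun r ↦ measurableSet_lt (by fun_prop) (by fun_prop)) fun ω ↦ ?_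
    have hzero : Tendsto (fun r : ℝ ↦ |r * V ω|) (𝓝 0) (𝓝 0) := by
      simpa using ((tendsto_id (α := ℝ) (x := 𝓝 0)).mul_const (V ω)).abs
    filter_upwards [hzero.eventually_lt_const ha] with r hr
    simpa using hr.le
  rw [measure_empty] at hlim
  exact (ENNReal.tendsto_toReal ENNReal.zero_ne_top).comp hlim

lemma tendsto_integral_compExpPos_const_mul (hY : Y ≠ 0)
    (hφ : Tendsto (fun r : ℝ ↦ r ^ (-Y) * ∫ ω, compExpPos (r * U ω) ∂P) (𝓝[>] 0) (𝓝 K))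
    {c : ℝ} (hc : 0 ≤ c) :
    Tendsto (fun r : ℝ ↦ r ^ (-Y) * ∫ ω, compExpPos (c * (r * U ω)) ∂P) (𝓝[>] 0)
      (𝓝 (K * c ^ Y)) := by
  rcases hc.eq_or_lt with rfl | hc
  · simp [compExpPos_of_nonpos, Real.zero_rpow hY]
  have hscale : Tendsto (fun r ↦ c * r) (𝓝[>] 0) (𝓝[>] 0) := by
    refine tendsto_nhdsWithin_iff.2 ⟨?_, eventually_mem_nhdsWithin.mono fun r hr ↦ mul_pos hc hr⟩
    simpa using ((continuous_const_mul c).tendsto 0).mono_left nhdsWithin_le_nhds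
  refine ((hφ.comp hscale).mul_const (c ^ Y)).congr'
    (eventually_mem_nhdsWithin.mono fun r (hr : 0 < r) ↦ ?_)
  simp only [Function.comp_apply, Real.mul_rpow hc.le hr.le, Real.rpow_neg hc.le, mul_assoc]
  field_simp

theorem tendsto_integral_windowGain [IsFiniteMeasure P] (hU : Integrable U P)
    (hV : Measurable V) (hUV : IndepFun U V P) (hY : Y ∈ Ioo 0 2)
    (hφ : Tendsto (fun r : ℝ ↦ r ^ (-Y) * ∫ ω, compExpPos (r * U ω) ∂P) (𝓝[>] 0) (𝓝 K))
    (hM : 1 ≤ M) (hG : 0 ≤ G) {ι : Type*} {l : Filter ι} {r s : ι → ℝ}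
    (hr : Tendsto r l (𝓝[>] 0)) (hs₀ : ∀ i, 0 ≤ s i) (hs : Tendsto s l (𝓝 0)) :
    Tendsto (fun i ↦ r i ^ (-Y) * ∫ ω, windowGain M G (s i) (r i * U ω) (r i * V ω) ∂P) l
      (𝓝 (K * (M ^ Y - (M - 1) ^ Y))) := by
  have hlim {c : ℝ} (hc : 0 ≤ c) := tendsto_integral_compExpPos_const_mul hY.1.ne' hφ hc
  have hmain := ((hlim (zero_le_one.trans hM)).sub (hlim (sub_nonneg.2 hM))).comp hr
  rw [← mul_sub] at hmain
  set A := 4 * ((M + G) ^ 2 + (2 * G + 1))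
  refine (tendsto_iff_of_dist (Metric.tendsto_nhds.2 fun ε hε ↦ ?_)).2 hmain
  have hA : Tendsto (fun δ : ℝ ↦ A * K * δ ^ (2 - Y)) (𝓝[>] 0) (𝓝 0) := by
    simpa using ((tendsto_rpow_nhdsGT_zero_s16 (sub_pos.2 hY.2)).mono_right
      nhdsWithin_le_nhds).const_mul (A * K)
  obtain ⟨δ, hδε, hδ, hδ₁⟩ := ((hA.eventually_lt_const hε).and (Ioo_mem_nhdsGT one_pos)).exists
  have herror : Tendsto (fun r : ℝ ↦ A * δ ^ 2 * (r ^ (-Y) * ∫ ω, compExpPos (δ⁻¹ * (r * U ω)) ∂P)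
      + r ^ (-Y) * (∫ ω, compExpPos ((M + G) * (r * U ω)) ∂P) *
        P.real {ω | δ ^ 2 < |r * V ω|}) (𝓝[>] 0) (𝓝 (A * K * δ ^ (2 - Y))) := by
    have hpow : A * K * δ ^ (2 - Y) = A * δ ^ 2 * (K * δ⁻¹ ^ Y) + K * (M + G) ^ Y * 0 := by
      rw [Real.inv_rpow hδ.le, Real.rpow_sub hδ, Real.rpow_two]; ring
    rw [hpow]
    exact ((hlim (inv_nonneg.2 hδ.le)).const_mul _).add ((hlim (by linarith)).mul
      ((tendsto_measureReal_lt_abs_mul hV (by positivity)).mono_left nhdsWithin_le_nhds))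
  filter_upwards [(herror.comp hr).eventually_lt_const hδε, hr eventually_mem_nhdsWithin,
    hs.eventually_lt_const (by nlinarith : 0 < δ - δ ^ 2)] with i hi (hri : 0 < r i) hsi
  have hbound := mul_le_mul_of_nonneg_left (abs_integral_windowGain_sub_le (hU.const_mul (r i))
    (hV.const_mul (r i)) (hUV.comp (measurable_const_mul (r i)) (measurable_const_mul (r i)))
    hM hG (hs₀ i) hδ (by linarith)) (Real.rpow_nonneg hri.le (-Y))
  rw [dist_zero_right, Real.norm_of_nonneg dist_nonneg, Real.dist_eq]
  simp only [Function.comp_apply] at hi ⊢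
  rw [← mul_sub, ← mul_sub, abs_mul, abs_of_nonneg (Real.rpow_nonneg hri.le _)]
  linarith

lemma eventually_integral_windowGain_le (hU : Integrable U P) (hV : AEMeasurable V P) (hY : Y ≠ 0)
    (hφ : Tendsto (fun r : ℝ ↦ r ^ (-Y) * ∫ ω, compExpPos (r * U ω) ∂P) (𝓝[>] 0) (𝓝 K))
    (hMG : 0 ≤ M + G) (hG : 0 ≤ G) :
    ∀ᶠ r in 𝓝[>] 0, ∀ s, 0 ≤ s →
      r ^ (-Y) * ∫ ω, windowGain M G s (r * U ω) (r * V ω) ∂P ≤ K * (M + G) ^ Y + 1 := by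
  filter_upwards [self_mem_nhdsWithin, (tendsto_integral_compExpPos_const_mul hY hφ
    hMG).eventually_le_const (lt_add_one _)] with r (hr : 0 < r) hle s hs
  refine le_trans (mul_le_mul_of_nonneg_left (integral_mono ?_ ?_ fun ω ↦ ?_)
    (Real.rpow_nonneg hr.le _)) hle
  · exact integrable_windowGain (hU.const_mul r) (hV.const_mul r) hG hs
  · exact integrable_compExpPos_mul (hU.const_mul r) _
  · exact windowGain_le hG hs _ _

end BigJump

section WindowProbability

lemma setIntegral_indicator_one_sub_exp {a b : ℝ} (hab : a ≤ b) :
    ∫ x in Ioi 0, (Icc a b).indicator (fun x ↦ 1 - Real.exp (-x)) x =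
      compExpPos b - compExpPos a := by
  have hset : (Ioi 0 ∩ Icc a b : Set ℝ) =ᵐ[volume] Ioc (max a 0) (max b 0) := by
    have hIoc : Ioi 0 ∩ Ioc a b = Ioc (max a 0) (max b 0) := by
      rw [inter_comm, Ioc_inter_Ioi]
      rcases le_total b 0 with hb | hb
      · rw [max_eq_right hb, Ioc_eq_empty_of_le (le_max_right a 0),
          Ioc_eq_empty_of_le (hb.trans (le_max_right a 0))]
      · rw [max_eq_left hb]
    rw [← hIoc]
    exact (ae_eq_refl _).inter Ioc_ae_eq_Icc.symm
  rw [setIntegral_indicator measurableSet_Icc, setIntegral_congr_set hset,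
    ← intervalIntegral.integral_of_le (max_le_max_right 0 hab), integral_one_sub_exp]
  rfl

variable {Ω : Type*} [MeasurableSpace Ω] {P : Measure Ω} [IsFiniteMeasure P]

theorem setIntegral_one_sub_exp_mul_measureReal {A B : Ω → ℝ} (hA : Measurable A)
    (hB : Measurable B) (hAB : A ≤ᵐ[P] B)
    (hint : Integrable (fun ω ↦ compExpPos (B ω) - compExpPos (A ω)) P) :
    ∫ x in Ioi 0, (1 - Real.exp (-x)) * P.real {ω | A ω ≤ x ∧ x ≤ B ω} =
      ∫ ω, (compExpPos (B ω) - compExpPos (A ω)) ∂P := by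
  let F (ω : Ω) : ℝ → ℝ := (Icc (A ω) (B ω)).indicator fun x ↦ 1 - Real.exp (-x)
  have hcont : Continuous fun x ↦ 1 - Real.exp (-x) := by fun_prop
  have hlower : MeasurableSet {z : Ω × ℝ | A z.1 ≤ z.2} :=
    measurableSet_le (by fun_prop) (by fun_prop)
  have hupper : MeasurableSet {z : Ω × ℝ | z.2 ≤ B z.1} :=
    measurableSet_le (by fun_prop) (by fun_prop)
  have hF : Measurable (Function.uncurry F) :=
    (hcont.measurable.comp measurable_snd).indicator (hlower.inter hupper)
  have hFx : ∀ᵐ ω ∂P, ∫ x in Ioi 0, F ω x = compExpPos (B ω) - compExpPos (A ω) :=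
    hAB.mono fun ω h ↦ setIntegral_indicator_one_sub_exp h
  have hFω (x : ℝ) :
      ∫ ω, F ω x ∂P = (1 - Real.exp (-x)) * P.real {ω | A ω ≤ x ∧ x ≤ B ω} := by
    rw [mul_comm, ← smul_eq_mul]
    exact integral_indicator_const _ (measurable_prodMk_right (hlower.inter hupper))
  have hFnonneg (ω : Ω) : ∀ x ∈ Ioi (0 : ℝ), ‖F ω x‖ = F ω x := fun x (hx : 0 < x) ↦
    Real.norm_of_nonneg (indicator_apply_nonneg fun _ ↦ by simpa using hx.le)
  have hFint : Integrable (Function.uncurry F) (P.prod (volume.restrict (Ioi 0))) := by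
    refine (integrable_prod_iff hF.aestronglyMeasurable).2 ⟨ae_of_all _ fun ω ↦ ?_, ?_⟩
    · have hIcc : IntegrableOn (fun x ↦ 1 - Real.exp (-x)) (Icc (A ω) (B ω)) volume :=
        hcont.integrableOn_Icc
      exact (hIcc.integrable_indicator measurableSet_Icc).restrict
    · refine hint.congr (hFx.mono fun ω h ↦ ?_)
      exact h.symm.trans (setIntegral_congr_fun measurableSet_Ioi (hFnonneg ω)).symm
  rw [← integral_congr_ae hFx, integral_integral_swap hFint]
  simp_rw [hFω]

variable {U V : Ω → ℝ} {M G s : ℝ}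

theorem setIntegral_exp_sub_one_mul_measureReal_window (hU : Measurable U) (hV : Measurable V)
    (hUint : Integrable U P) (hG : 0 ≤ G) (hs : 0 ≤ s) :
    ∫ x in Ioi 0, (Real.exp (-x) - 1) * P.real {ω | s ≤ U ω - V ω ∧
        (M - 1) * U ω + (G + 1) * V ω ≤ x ∧ x ≤ M * U ω + G * V ω} =
      -∫ ω, windowGain M G s (U ω) (V ω) ∂P := by
  have hE : MeasurableSet {ω | s ≤ U ω - V ω} := measurableSet_le (by fun_prop) (by fun_prop)
  have hgain : (fun ω ↦ windowGain M G s (U ω) (V ω)) = {ω | s ≤ U ω - V ω}.indicator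
      fun ω ↦ compExpPos (M * U ω + G * V ω) - compExpPos ((M - 1) * U ω + (G + 1) * V ω) := rfl
  have hint := integrable_windowGain (M := M) hUint hV.aemeasurable hG hs
  rw [hgain, integrable_indicator_iff hE] at hint
  rw [hgain, integral_indicator hE, ← setIntegral_one_sub_exp_mul_measureReal (by fun_prop)
    (by fun_prop) ((ae_restrict_mem hE).mono fun ω (h : s ≤ U ω - V ω) ↦ by linarith) hint,
    ← integral_neg]
  refine integral_congr_ae (ae_of_all _ fun x ↦ ?_)
  simp only
  rw [measureReal_restrict_apply' hE, inter_comm, ← neg_mul, neg_sub]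
  rfl

lemma measurable_integral_windowGain (hU : Measurable U) (hV : Measurable V) :
    Measurable fun s ↦ ∫ ω, windowGain M G s (U ω) (V ω) ∂P :=
  ((measurable_windowGain M G).comp (by fun_prop :
    Measurable fun z : ℝ × Ω ↦ (z.1, U z.2, V z.2))).stronglyMeasurable.integral_prod_right'
      |>.measurable

lemma window_rescale {t : ℝ} (ht : 0 < t) (Y w x u v : ℝ) :
    (t ^ ((1 : ℝ) / 2 - 1 / Y) * w ≤ u - v ∧ (M - 1) * u + (G + 1) * v ≤ t ^ (-(1 / Y)) * x ∧
        t ^ (-(1 / Y)) * x ≤ M * u + G * v) ↔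
      √t * w ≤ t ^ (1 / Y) * u - t ^ (1 / Y) * v ∧
        (M - 1) * (t ^ (1 / Y) * u) + (G + 1) * (t ^ (1 / Y) * v) ≤ x ∧
        x ≤ M * (t ^ (1 / Y) * u) + G * (t ^ (1 / Y) * v) := by
  have hr : 0 < t ^ (1 / Y) := Real.rpow_pos_of_pos ht _
  have hcut : t ^ ((1 : ℝ) / 2 - 1 / Y) * w = (t ^ (1 / Y))⁻¹ * (√t * w) := by
    rw [Real.rpow_sub ht, ← Real.sqrt_eq_rpow]; ring
  rw [hcut, Real.rpow_neg ht.le, inv_mul_le_iff₀ hr, le_inv_mul_iff₀ hr, inv_mul_le_iff₀ hr]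
  ring_nf

end WindowProbability

section GaussianAverage

variable {σ : ℝ}

lemma setIntegral_gaussian_Ioi (hσ : σ ≠ 0) :
    ∫ w in Ioi 0, Real.exp (-(w ^ 2) / (2 * σ ^ 2)) / √(2 * Real.pi * σ ^ 2) = 1 / 2 := by
  have hexponent (w : ℝ) : -(w ^ 2) / (2 * σ ^ 2) = -(1 / (2 * σ ^ 2)) * w ^ 2 := by ring
  have hpos : 0 < √(2 * Real.pi * σ ^ 2) := Real.sqrt_pos.2 (by positivity)
  simp_rw [hexponent]
  rw [integral_div, integral_gaussian_Ioi,
    show Real.pi / (1 / (2 * σ ^ 2)) = 2 * Real.pi * σ ^ 2 by field_simp,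
    div_right_comm, div_self hpos.ne']

lemma exp_sqrt_mul_mul_exp_neg_sq_le {t w : ℝ} (hσ : σ ≠ 0) (ht : t ≤ 1) (hw : 0 ≤ w) :
    Real.exp (√t * w) * Real.exp (-(w ^ 2) / (2 * σ ^ 2)) ≤
      Real.exp (σ ^ 2) * Real.exp (-(1 / (4 * σ ^ 2)) * w ^ 2) := by
  have hlinear : √t * w ≤ w := mul_le_of_le_one_left hw (Real.sqrt_le_one.2 ht)
  have hsquare : σ ^ 2 + -(1 / (4 * σ ^ 2)) * w ^ 2 - (w + -(w ^ 2) / (2 * σ ^ 2)) =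
      (w / (2 * σ) - σ) ^ 2 := by
    field_simp; ring
  rw [← Real.exp_add, ← Real.exp_add, Real.exp_le_exp]
  linarith [sq_nonneg (w / (2 * σ) - σ)]

theorem tendsto_setIntegral_mul_exp_sqrt_mul_gaussian (hσ : σ ≠ 0) {F : ℝ → ℝ → ℝ} {L B : ℝ}
    (hF : ∀ᶠ t in 𝓝[>] 0, AEStronglyMeasurable (F t) (volume.restrict (Ioi 0)))
    (hbound : ∀ᶠ t in 𝓝[>] 0, ∀ w, 0 < w → |F t w| ≤ B)
    (hlim : ∀ w, 0 < w → Tendsto (fun t ↦ F t w) (𝓝[>] 0) (𝓝 L)) :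
    Tendsto (fun t ↦ ∫ w in Ioi 0, F t w * Real.exp (√t * w) *
        (Real.exp (-(w ^ 2) / (2 * σ ^ 2)) / √(2 * Real.pi * σ ^ 2)))
      (𝓝[>] 0) (𝓝 (L / 2)) := by
  have hL : L / 2 = ∫ w in Ioi 0, L * Real.exp (√0 * w) *
      (Real.exp (-(w ^ 2) / (2 * σ ^ 2)) / √(2 * Real.pi * σ ^ 2)) := by
    simp_rw [Real.sqrt_zero, zero_mul, Real.exp_zero, mul_one]
    rw [integral_const_mul, setIntegral_gaussian_Ioi hσ, mul_one_div]
  rw [hL]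
  refine tendsto_integral_filter_of_dominated_convergence (fun w ↦ B / √(2 * Real.pi * σ ^ 2) *
    (Real.exp (σ ^ 2) * Real.exp (-(1 / (4 * σ ^ 2)) * w ^ 2))) ?_ ?_ ?_ ?_
  · filter_upwards [hF] with t ht
    exact (ht.mul (by fun_prop)).mul (by fun_prop)
  · filter_upwards [hbound, Ioo_mem_nhdsGT one_pos] with t hB ht
    filter_upwards [ae_restrict_mem measurableSet_Ioi] with w (hw : 0 < w)
    have hB' : 0 ≤ B := (abs_nonneg _).trans (hB w hw)
    rw [norm_mul, norm_mul, Real.norm_eq_abs, Real.norm_of_nonneg (Real.exp_nonneg _),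
      Real.norm_of_nonneg (by positivity)]
    calc _ ≤ B * Real.exp (√t * w) *
          (Real.exp (-(w ^ 2) / (2 * σ ^ 2)) / √(2 * Real.pi * σ ^ 2)) := by
          gcongr; exact hB w hw
      _ = B / √(2 * Real.pi * σ ^ 2) *
          (Real.exp (√t * w) * Real.exp (-(w ^ 2) / (2 * σ ^ 2))) := by ring
      _ ≤ _ := mul_le_mul_of_nonneg_left (exp_sqrt_mul_mul_exp_neg_sq_le hσ ht.2.le hw.le)
          (by positivity)
  · exact (((integrable_exp_neg_mul_sq (by positivity)).const_mul _).const_mul _).integrableOn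
  · filter_upwards [ae_restrict_mem measurableSet_Ioi] with w hw
    refine ((hlim w hw).mul ?_).mul_const _
    exact ((show Continuous fun t ↦ Real.exp (√t * w) by fun_prop).tendsto 0).mono_left
      nhdsWithin_le_nhds

end GaussianAverage

section Main

variable {Ω : Type*} [MeasurableSpace Ω] {P : Measure Ω} [IsProbabilityMeasure P] {U V : Ω → ℝ}
  {Y K M G σ : ℝ}

theorem integrable_and_tendsto_integral_compExpPos_mul (hY : Y ∈ Ioo 1 2)
    (hU : Measurable U)
    (hUchar : ∀ u : ℝ, (∫ ω, Complex.exp (Complex.I * u * (U ω)) ∂P) =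
      Complex.exp (((K * |u| ^ Y : ℝ) : ℂ) * (((Real.cos (Real.pi * Y / 2) : ℝ) : ℂ)
        - Complex.I * ((Real.sign u : ℝ) : ℂ) * ((Real.sin (Real.pi * Y / 2) : ℝ) : ℂ)))) :
    Integrable U P ∧
      Tendsto (fun r : ℝ ↦ r ^ (-Y) * ∫ ω, compExpPos (r * U ω) ∂P) (𝓝[>] 0) (𝓝 K) := by
  have hY₀ : 0 < Y := zero_lt_one.trans hY.1
  have := Measure.isProbabilityMeasure_map (μ := P) hU.aemeasurable
  have hchar (u : ℝ) : charFun (P.map U) u =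
      Complex.exp (K * (-Complex.I * u) ^ (Y : ℂ)) := by
    rw [charFun_apply_real, integral_map hU.aemeasurable (by fun_prop),
      cpow_neg_I_mul_ofReal hY₀.ne']
    simp_rw [mul_comm _ Complex.I, ← mul_assoc]
    rw [hUchar]
    push_cast; ring_nf
  have hlaplace (l : ℝ) (hl : 0 < l) :=
    integrable_exp_and_integral_exp_eq_of_stable ⟨hY₀, hY.2⟩ hchar hl.le
  have hid := (integrable_id_and_integral_eq_zero_of_laplace hY.1 (fun l hl ↦ (hlaplace l hl).1)
    fun l hl ↦ (hlaplace l hl).2).1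
  have hφ := tendsto_integral_compExpPos_mul hY (fun l hl ↦ (hlaplace l hl).1)
    fun l hl ↦ (hlaplace l hl).2
  refine ⟨(integrable_map_measure (by fun_prop) hU.aemeasurable).1 hid, hφ.congr fun r ↦ ?_⟩
  rw [integral_map hU.aemeasurable (by fun_prop)]

theorem mul_setIntegral_window_eq (hU : Measurable U) (hV : Measurable V) (hUint : Integrable U P)
    (hG : 0 ≤ G) {t : ℝ} (ht : 0 < t) (g : ℝ → ℝ) :
    t⁻¹ * ∫ w in Ioi 0,
        (∫ x in Ioi 0, (Real.exp (-x) - 1) *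
          (P {ω | t ^ ((1 : ℝ) / 2 - 1 / Y) * w ≤ U ω - V ω ∧
              (M - 1) * U ω + (G + 1) * V ω ≤ t ^ (-(1 / Y)) * x ∧
              t ^ (-(1 / Y)) * x ≤ M * U ω + G * V ω}).toReal) * Real.exp (√t * w) * g w =
      ∫ w in Ioi 0, -(t⁻¹ *
        ∫ ω, windowGain M G (√t * w) (t ^ (1 / Y) * U ω) (t ^ (1 / Y) * V ω) ∂P) *
          Real.exp (√t * w) * g w := by
  rw [← integral_const_mul]
  refine setIntegral_congr_fun measurableSet_Ioi fun w (hw : 0 < w) ↦ ?_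
  simp only [window_rescale ht, ← measureReal_def]
  rw [setIntegral_exp_sub_one_mul_measureReal_window (hU.const_mul _) (hV.const_mul _)
    (hUint.const_mul _) hG (by positivity)]
  ring

theorem stmt16_general (hY : Y ∈ Ioo 1 2) (hM : 1 ≤ M) (hG : 0 ≤ G) (hσ : σ ≠ 0)
    (hU : Measurable U) (hV : Measurable V) (hUV : IndepFun U V P)
    (hUchar : ∀ u : ℝ, (∫ ω, Complex.exp (Complex.I * u * (U ω)) ∂P) =
      Complex.exp (((K * |u| ^ Y : ℝ) : ℂ) * (((Real.cos (Real.pi * Y / 2) : ℝ) : ℂ)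
        - Complex.I * ((Real.sign u : ℝ) : ℂ) * ((Real.sin (Real.pi * Y / 2) : ℝ) : ℂ)))) :
    Tendsto (fun t ↦ t⁻¹ * ∫ w in Ioi 0,
        (∫ x in Ioi 0, (Real.exp (-x) - 1) *
          (P {ω | t ^ ((1 : ℝ) / 2 - 1 / Y) * w ≤ U ω - V ω ∧
              (M - 1) * U ω + (G + 1) * V ω ≤ t ^ (-(1 / Y)) * x ∧
              t ^ (-(1 / Y)) * x ≤ M * U ω + G * V ω}).toReal)
        * Real.exp (√t * w) * (Real.exp (-(w ^ 2) / (2 * σ ^ 2)) / √(2 * Real.pi * σ ^ 2)))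
      (𝓝[>] 0) (𝓝 (-(K / 2) * (M ^ Y - (M - 1) ^ Y))) := by
  have hY₀ : 0 < Y := zero_lt_one.trans hY.1
  obtain ⟨hUint, hφ⟩ := integrable_and_tendsto_integral_compExpPos_mul hY hU hUchar
  have hr : Tendsto (fun t : ℝ ↦ t ^ (1 / Y)) (𝓝[>] 0) (𝓝[>] 0) :=
    tendsto_rpow_nhdsGT_zero_s16 (one_div_pos.2 hY₀)
  rw [show -(K / 2) * (M ^ Y - (M - 1) ^ Y) = -(K * (M ^ Y - (M - 1) ^ Y)) / 2 by ring]
  refine Tendsto.congr' (eventually_mem_nhdsWithin.mono fun t ht ↦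
    (mul_setIntegral_window_eq hU hV hUint hG ht _).symm)
    (tendsto_setIntegral_mul_exp_sqrt_mul_gaussian (B := K * (M + G) ^ Y + 1) hσ
      (Eventually.of_forall fun t ↦ ?_) ?_ fun w hw ↦ ?_)
  · exact ((((measurable_integral_windowGain (hU.const_mul _) (hV.const_mul _)).comp
      (measurable_const_mul √t)).const_mul _).neg).aestronglyMeasurable
  · filter_upwards [hr.eventually (eventually_integral_windowGain_le (M := M) hUint
      hV.aemeasurable hY₀.ne' hφ (by linarith) hG), self_mem_nhdsWithin]
      with t hle (ht : 0 < t) w hw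
    have hnonneg : 0 ≤ ∫ ω, windowGain M G (√t * w) (t ^ (1 / Y) * U ω) (t ^ (1 / Y) * V ω) ∂P :=
      integral_nonneg fun ω ↦ windowGain_nonneg (by positivity) _ _
    rw [abs_neg, abs_of_nonneg (by positivity), ← rpow_one_div_rpow_neg ht.le hY₀.ne']
    exact hle _ (by positivity)
  · have hs : Tendsto (fun t ↦ √t * w) (𝓝[>] 0) (𝓝 0) := by
      simpa using ((show Continuous fun t ↦ √t * w by fun_prop).tendsto 0).mono_left
        nhdsWithin_le_nhds
    refine (tendsto_integral_windowGain hUint hV hUV ⟨hY₀, hY.2⟩ hφ hM hG hr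
      (fun t ↦ by positivity) hs).neg.congr'
      (eventually_mem_nhdsWithin.mono fun t (ht : 0 < t) ↦ ?_)
    rw [rpow_one_div_rpow_neg ht.le hY₀.ne']

end Main

/-- Limit of the Gaussian-averaged double integral (display (ExpAsyJ332)). -/
theorem stmt16
    {Ω : Type} [MeasurableSpace Ω] (P : Measure Ω) [IsProbabilityMeasure P]
    (Y C M G σ : ℝ) (hY : Y ∈ Set.Ioo (1:ℝ) 2) (hC : 0 < C) (hM : 1 < M) (hG : 0 < G)
    (hσ : 0 < σ)
    (U V : Ω → ℝ) (hU : Measurable U) (hV : Measurable V)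
    (hIndep : IndepFun U V P)
    (hUchar : ∀ u : ℝ, (∫ ω, Complex.exp (Complex.I * u * (U ω)) ∂P) =
      Complex.exp (((C * Real.Gamma (-Y) * |u| ^ Y : ℝ) : ℂ) *
        (((Real.cos (Real.pi * Y / 2) : ℝ) : ℂ)
          - Complex.I * ((Real.sign u : ℝ) : ℂ) * ((Real.sin (Real.pi * Y / 2) : ℝ) : ℂ))))
    (hVchar : ∀ u : ℝ, (∫ ω, Complex.exp (Complex.I * u * (V ω)) ∂P) =
      Complex.exp (((C * Real.Gamma (-Y) * |u| ^ Y : ℝ) : ℂ) *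
        (((Real.cos (Real.pi * Y / 2) : ℝ) : ℂ)
          - Complex.I * ((Real.sign u : ℝ) : ℂ) * ((Real.sin (Real.pi * Y / 2) : ℝ) : ℂ)))) :
    Filter.Tendsto
      (fun t => t⁻¹ * ∫ w in Set.Ioi (0:ℝ),
        (∫ x in Set.Ioi (0:ℝ), (Real.exp (-x) - 1) *
          (P {ω | t ^ ((1:ℝ)/2 - 1/Y) * w ≤ U ω - V ω ∧
              (M - 1) * U ω + (G + 1) * V ω ≤ t ^ (-(1/Y)) * x ∧
              t ^ (-(1/Y)) * x ≤ M * U ω + G * V ω}).toReal)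
        * Real.exp (Real.sqrt t * w)
        * (Real.exp (-(w ^ 2) / (2 * σ ^ 2)) / Real.sqrt (2 * Real.pi * σ ^ 2)))
      (𝓝[>] (0:ℝ))
      (𝓝 (-(C * Real.Gamma (-Y) / 2) * (M ^ Y - (M - 1) ^ Y))) :=
  stmt16_general hY hM.le hG.le hσ.ne' hU hV hIndep hUchar
end

section
/- Laplace transform of the centered one-sided stable law (underlying display (expUt)): let U be a real random variable whose characteristic function is u ↦ exp(C·Γ(−Y)·|u|^Y·(cos(πY/2) − i·sign(u)·sin(πY/2))). Then for every λ ≥ 0, E[e^{−λ·U}] = exp(C·Γ(−Y)·λ^Y). -/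
open MeasureTheory Filter Topology Set

/-!
Suppose the characteristic function of a finite measure `μ` on `ℝ` is `t ↦ f (t * I)`, where `f` is
bounded and continuous on the strip `0 ≤ re z ≤ l` and holomorphic inside. Exponential moments of
`μ` are not known to exist, so `f l = ∫ exp (l * x) ∂μ` cannot be obtained by continuing both sides.
Instead, average over the line `re z = l` against a centered Gaussian of variance `v`. Shifting the
contour to the imaginary axis, for `f` and for each `z ↦ exp (x * z)`, and applying Fubini there
yields `∫ exp (l * x - v * x ^ 2 / 2) ∂μ = ∫ f (l + t * I) ∂N(0, v)`. As `v → 0` the right-hand side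
tends to `f l`; on the left, Fatou's lemma gives integrability of `exp (l * x)`, and dominated
convergence gives the limit.

This applies to the law of `-U` and `f z = exp (C * Γ(-Y) * z ^ Y)`, which is bounded on the strip
because `Γ(-Y) * re (z ^ Y)` is bounded above there.
-/

open Complex (I re)
open ProbabilityTheory
open scoped NNReal ENNReal Complex

section VerticalLine

variable {E : Type*} [NormedAddCommGroup E] {f : ℂ → E} {a b c : ℝ}

lemma continuous_vertical_line (hc : c ∈ Icc a b) (hf : ContinuousOn f (re ⁻¹' Icc a b)) :
    Continuous fun t : ℝ ↦ f (c + t * I) :=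
  hf.comp_continuous (by fun_prop) fun t ↦ by simpa using hc

lemma integrable_vertical_line {g : ℝ → ℝ} (hc : c ∈ Icc a b) (hf : ContinuousOn f (re ⁻¹' Icc a b))
    (hg : Integrable g) (hfg : ∀ z ∈ re ⁻¹' Icc a b, ‖f z‖ ≤ g z.im) :
    Integrable fun t : ℝ ↦ f (c + t * I) :=
  hg.mono' (continuous_vertical_line hc hf).aestronglyMeasurable <|
    .of_forall fun t ↦ by simpa using hfg (c + t * I) (by simpa using hc)

variable [NormedSpace ℂ E]

lemma tendsto_intervalIntegral_horizontal_segment {g : ℝ → ℝ} {l : Filter ℝ} (hab : a ≤ b)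
    (hg : Tendsto g l (𝓝 0)) (hfg : ∀ z ∈ re ⁻¹' Icc a b, ‖f z‖ ≤ g z.im) :
    Tendsto (fun T : ℝ ↦ ∫ x in a..b, f (x + T * I)) l (𝓝 0) := by
  refine squeeze_zero_norm (fun T ↦ ?_) (by simpa using hg.mul_const |b - a|)
  refine intervalIntegral.norm_integral_le_of_norm_le_const fun x hx ↦ ?_
  rw [uIoc_of_le hab] at hx
  simpa using hfg (x + T * I) (by simpa using Ioc_subset_Icc_self hx)

lemma intervalIntegral_vertical_segment_eq (hab : a ≤ b) (hf : ContinuousOn f (re ⁻¹' Icc a b))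
    (hf' : DifferentiableOn ℂ f (re ⁻¹' Ioo a b)) (T : ℝ) :
    ∫ t in -T..T, f (b + t * I) = (∫ t in -T..T, f (a + t * I)) +
      I • ((∫ x in a..b, f (x + (-T : ℝ) * I)) - ∫ x in a..b, f (x + T * I)) := by
  have cauchy := Complex.integral_boundary_rect_eq_zero_of_continuousOn_of_differentiableOn f
    ⟨a, -T⟩ ⟨b, T⟩ (hf.mono fun z hz ↦ by simpa [uIcc_of_le hab] using hz.1)
    (hf'.mono fun z hz ↦ by simpa [hab] using hz.1)
  have := congrArg (I • ·) cauchy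
  simp only [smul_sub, smul_add, smul_zero, smul_smul, Complex.I_mul_I, neg_one_smul] at this
  rw [smul_sub, ← sub_eq_zero, ← neg_eq_zero, ← this]
  abel

theorem integral_vertical_line_eq {g : ℝ → ℝ} (hab : a ≤ b) (hf : ContinuousOn f (re ⁻¹' Icc a b))
    (hf' : DifferentiableOn ℂ f (re ⁻¹' Ioo a b)) (hg : Integrable g)
    (hg₀ : Tendsto g (cocompact ℝ) (𝓝 0)) (hfg : ∀ z ∈ re ⁻¹' Icc a b, ‖f z‖ ≤ g z.im) :
    ∫ t : ℝ, f (a + t * I) = ∫ t : ℝ, f (b + t * I) := by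
  have vertical (c : ℝ) (hc : c ∈ Icc a b) : Tendsto (fun T : ℝ ↦ ∫ t in -T..T, f (c + t * I))
      atTop (𝓝 (∫ t : ℝ, f (c + t * I))) :=
    intervalIntegral_tendsto_integral (integrable_vertical_line hc hf hg hfg)
      tendsto_neg_atTop_atBot tendsto_id
  have horizontal := tendsto_intervalIntegral_horizontal_segment hab hg₀ hfg
  have top := horizontal.mono_left atTop_le_cocompact
  have bottom := (horizontal.mono_left atBot_le_cocompact).comp tendsto_neg_atTop_atBot
  refine tendsto_nhds_unique ?_ (vertical b (right_mem_Icc.2 hab))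
  simp_rw [intervalIntegral_vertical_segment_eq hab hf hf']
  simpa using (vertical a (left_mem_Icc.2 hab)).add ((bottom.sub top).const_smul I)

end VerticalLine

section GaussianAverage

variable {E : Type*} [NormedAddCommGroup E]

theorem tendsto_integral_gaussianReal [NormedSpace ℝ E] [CompleteSpace E] {g : ℝ → E} {A : ℝ}
    (hg : Continuous g) (hgA : ∀ x, ‖g x‖ ≤ A) (m : ℝ) :
    Tendsto (fun v : ℝ≥0 ↦ ∫ x, g x ∂gaussianReal m v) (𝓝 0) (𝓝 (g m)) := by
  have standardize (v : ℝ≥0) :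
      ∫ x, g x ∂gaussianReal m v = ∫ x, g (m + √v * x) ∂gaussianReal 0 1 := by
    have law : (gaussianReal 0 1).map (fun x ↦ m + √v * x) = gaussianReal m v := by
      have variance : NNReal.mk (√v ^ 2) (sq_nonneg _) = v := NNReal.eq (Real.sq_sqrt v.2)
      rw [← Function.comp_def (m + ·), ← Measure.map_map (by fun_prop) (by fun_prop),
        gaussianReal_map_const_mul, gaussianReal_map_const_add, variance, mul_zero, zero_add,
        mul_one]
    rw [← law, integral_map (by fun_prop) hg.aestronglyMeasurable]
  simp_rw [standardize]
  have limit : g m = ∫ _, g m ∂gaussianReal 0 1 := by simp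
  rw [limit]
  refine tendsto_integral_filter_of_dominated_convergence (fun _ ↦ A)
    (.of_forall fun v ↦ by fun_prop) (.of_forall fun v ↦ .of_forall fun x ↦ hgA _)
    (integrable_const A) (.of_forall fun x ↦ ?_)
  have : Continuous fun v : ℝ≥0 ↦ g (m + √v * x) := by fun_prop
  simpa using this.tendsto' 0 (g m) (by simp)

/-- The entire function whose value at `t * I` is the density of `gaussianReal 0 v` at `t`, so that
Gaussian averages over vertical lines are contour integrals against it. -/
noncomputable def gaussianKernel (v : ℝ≥0) (z : ℂ) : ℂ :=
  ((√(2 * Real.pi * v))⁻¹ : ℝ) * cexp (z ^ 2 / (2 * v))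

lemma differentiable_gaussianKernel (v : ℝ≥0) : Differentiable ℂ (gaussianKernel v) := by
  unfold gaussianKernel
  fun_prop

lemma norm_gaussianKernel (v : ℝ≥0) (z : ℂ) :
    ‖gaussianKernel v z‖ = Real.exp (z.re ^ 2 / (2 * v)) * gaussianPDFReal 0 v z.im := by
  have hre : (z ^ 2 / (2 * v)).re = z.re ^ 2 / (2 * v) + -(z.im - 0) ^ 2 / (2 * v) := by
    rw [show (2 * v : ℂ) = ((2 * v : ℝ) : ℂ) by push_cast; rfl, Complex.div_ofReal_re]
    simp [pow_two]
    ring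
  rw [gaussianKernel, gaussianPDFReal, norm_mul, Complex.norm_exp, hre, Real.exp_add,
    Complex.norm_of_nonneg (by positivity)]
  ring

lemma gaussianKernel_ofReal_mul_I (v : ℝ≥0) (t : ℝ) :
    gaussianKernel v (t * I) = gaussianPDFReal 0 v t := by
  simp [gaussianKernel, gaussianPDFReal, mul_pow]

lemma tendsto_gaussianPDFReal_cocompact {v : ℝ≥0} (hv : v ≠ 0) :
    Tendsto (gaussianPDFReal 0 v) (cocompact ℝ) (𝓝 0) := by
  have h := (tendsto_rpow_abs_mul_exp_neg_mul_sq_cocompact (a := (2 * v)⁻¹) (by positivity) 0)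
  simpa [gaussianPDFReal_def, div_eq_inv_mul] using h.const_mul (√(2 * Real.pi * v))⁻¹

variable [NormedSpace ℂ E] {f : ℂ → E} {a b A : ℝ} {v : ℝ≥0}

theorem integral_gaussianReal_vertical_line (hv : v ≠ 0) (hab : a ≤ b)
    (hf : ContinuousOn f (re ⁻¹' Icc a b)) (hf' : DifferentiableOn ℂ f (re ⁻¹' Ioo a b))
    (hfA : ∀ z ∈ re ⁻¹' Icc a b, ‖f z‖ ≤ A) :
    ∫ t, f (b + t * I) ∂gaussianReal 0 v =
      ∫ t : ℝ, gaussianKernel v (a + t * I - b) • f (a + t * I) := by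
  have hk : Differentiable ℂ fun z ↦ gaussianKernel v (z - b) :=
    (differentiable_gaussianKernel v).comp (differentiable_id.sub_const _)
  have decay (z : ℂ) (hz : z ∈ re ⁻¹' Icc a b) : ‖gaussianKernel v (z - b) • f z‖ ≤
      Real.exp ((b - a) ^ 2 / (2 * v)) * gaussianPDFReal 0 v z.im * A := by
    have hre : (z.re - b) ^ 2 ≤ (b - a) ^ 2 := by
      nlinarith [hz.1, hz.2]
    rw [norm_smul, norm_gaussianKernel]
    simp only [Complex.sub_re, Complex.ofReal_re, Complex.sub_im, Complex.ofReal_im, sub_zero]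
    gcongr
    · exact mul_nonneg (Real.exp_pos _).le (gaussianPDFReal_nonneg ..)
    · exact gaussianPDFReal_nonneg ..
    · exact hfA z hz
  have shift := integral_vertical_line_eq (f := fun z ↦ gaussianKernel v (z - b) • f z) hab
    (hk.continuous.continuousOn.smul hf) (hk.differentiableOn.smul hf')
    (((integrable_gaussianPDFReal 0 v).const_mul _).mul_const A)
    (by simpa using ((tendsto_gaussianPDFReal_cocompact hv).const_mul _).mul_const A) decay
  rw [shift, integral_gaussianReal_eq_integral_smul hv]
  simp [gaussianKernel_ofReal_mul_I]

end GaussianAverage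

section Extension

lemma integrable_of_tendsto_integral_of_nonneg {α ι : Type*} {m : MeasurableSpace α}
    {μ : Measure α} {l : Filter ι} [l.NeBot] [l.IsCountablyGenerated] {F : ι → α → ℝ} {g : α → ℝ}
    {L : ℝ} (hF : ∀ i, Integrable (F i) μ) (hF₀ : ∀ i, 0 ≤ F i)
    (hFg : ∀ x, Tendsto (F · x) l (𝓝 (g x)))
    (hL : Tendsto (fun i ↦ ∫ x, F i x ∂μ) l (𝓝 L)) : Integrable g μ := by
  refine ⟨aestronglyMeasurable_of_tendsto_ae l (fun i ↦ (hF i).1) (.of_forall hFg), ?_⟩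
  calc ∫⁻ x, ‖g x‖ₑ ∂μ = ∫⁻ x, liminf (fun i ↦ ‖F i x‖ₑ) l ∂μ := by
        simp_rw [(hFg _).enorm.liminf_eq]
    _ ≤ liminf (fun i ↦ ∫⁻ x, ‖F i x‖ₑ ∂μ) l :=
        lintegral_liminf_le' fun i ↦ (hF i).1.aemeasurable.enorm
    _ = liminf (fun i ↦ ENNReal.ofReal (∫ x, F i x ∂μ)) l := by
        congr with i
        rw [ofReal_integral_eq_lintegral_ofReal (hF i) (.of_forall (hF₀ i))]
        exact lintegral_congr fun x ↦ Real.enorm_of_nonneg (hF₀ i x)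
    _ = ENNReal.ofReal L := (ENNReal.tendsto_ofReal hL).liminf_eq
    _ < ∞ := ENNReal.ofReal_lt_top

lemma integral_cexp_mul_gaussianReal_vertical_line (v : ℝ≥0) (l x : ℝ) :
    ∫ t, cexp (x * (l + t * I)) ∂gaussianReal 0 v = cexp (l * x - v * x ^ 2 / 2) := by
  have h := charFun_gaussianReal (μ := 0) (v := v) x
  rw [charFun_apply_real] at h
  simp_rw [mul_add, Complex.exp_add, integral_const_mul]
  simp_rw [← mul_assoc, h, ← Complex.exp_add]
  congr 1
  push_cast
  ring

variable {μ : Measure ℝ} [IsFiniteMeasure μ] {f : ℂ → ℂ} {l A : ℝ} {v : ℝ≥0}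

lemma integrable_exp_mul_sub_mul_sq (hv : v ≠ 0) :
    Integrable (fun x ↦ Real.exp (l * x - v * x ^ 2 / 2)) μ := by
  refine (integrable_const (Real.exp (l ^ 2 / (2 * v)))).mono' (by fun_prop) (.of_forall fun x ↦ ?_)
  have square : l ^ 2 / (2 * v) - (l * x - v * x ^ 2 / 2) = (l - v * x) ^ 2 / (2 * v) := by
    field_simp
    ring
  rw [Real.norm_of_nonneg (Real.exp_pos _).le, Real.exp_le_exp, ← sub_nonneg, square]
  positivity

lemma integrable_gaussianKernel_mul_cexp :
    Integrable (fun p : ℝ × ℝ ↦ gaussianKernel v (p.1 * I - l) * cexp (p.1 * p.2 * I))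
      (volume.prod μ) := by
  have hk := (differentiable_gaussianKernel v).continuous
  refine ((((integrable_gaussianPDFReal 0 v).const_mul (Real.exp (l ^ 2 / (2 * v)))).comp_fst
    μ)).mono' (by fun_prop) (.of_forall fun p ↦ ?_)
  rw [norm_mul, norm_gaussianKernel, ← Complex.ofReal_mul, Complex.norm_exp_ofReal_mul_I]
  simp

theorem integral_exp_mul_sub_mul_sq_of_charFun_eq (hv : v ≠ 0) (hl : 0 ≤ l)
    (hf : ContinuousOn f (re ⁻¹' Icc 0 l)) (hf' : DifferentiableOn ℂ f (re ⁻¹' Ioo 0 l))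
    (hfA : ∀ z ∈ re ⁻¹' Icc 0 l, ‖f z‖ ≤ A) (hμ : ∀ t : ℝ, charFun μ t = f (t * I)) :
    ((∫ x, Real.exp (l * x - v * x ^ 2 / 2) ∂μ : ℝ) : ℂ) =
      ∫ t, f (l + t * I) ∂gaussianReal 0 v := by
  have hexp (x : ℝ) (z : ℂ) (hz : z ∈ re ⁻¹' Icc 0 l) : ‖cexp (x * z)‖ ≤ Real.exp (|x| * l) := by
    rw [Complex.norm_exp, Complex.re_ofReal_mul]
    gcongr
    exacts [hz.1, le_abs_self x, hz.2]
  have shift_exp (x : ℝ) := integral_gaussianReal_vertical_line (f := fun z ↦ cexp (x * z)) hv hl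
    (by fun_prop) (by fun_prop) (hexp x)
  have shift_f := integral_gaussianReal_vertical_line hv hl hf hf' hfA
  have phase (x t : ℝ) : (x : ℂ) * (t * I) = t * x * I := by ring
  simp only [Complex.ofReal_zero, zero_add, smul_eq_mul] at shift_exp shift_f
  calc ((∫ x, Real.exp (l * x - v * x ^ 2 / 2) ∂μ : ℝ) : ℂ)
      = ∫ x, cexp (l * x - v * x ^ 2 / 2) ∂μ := by
        rw [← integral_complex_ofReal]
        push_cast
        rfl
    _ = ∫ x, (∫ t : ℝ, gaussianKernel v (t * I - l) * cexp (t * x * I)) ∂μ := by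
        simp_rw [← integral_cexp_mul_gaussianReal_vertical_line, shift_exp, phase]
    _ = ∫ t : ℝ, ∫ x, gaussianKernel v (t * I - l) * cexp (t * x * I) ∂μ :=
        (integral_integral_swap integrable_gaussianKernel_mul_cexp).symm
    _ = ∫ t, f (l + t * I) ∂gaussianReal 0 v := by
        simp_rw [shift_f, ← hμ, charFun_apply_real, integral_const_mul]

theorem mgf_eq_of_charFun_eq (hl : 0 ≤ l)
    (hf : ContinuousOn f (re ⁻¹' Icc 0 l)) (hf' : DifferentiableOn ℂ f (re ⁻¹' Ioo 0 l))
    (hfA : ∀ z ∈ re ⁻¹' Icc 0 l, ‖f z‖ ≤ A) (hμ : ∀ t : ℝ, charFun μ t = f (t * I)) :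
    l ∈ integrableExpSet id μ ∧ mgf id μ l = f l := by
  let v (n : ℕ) : ℝ≥0 := 1 / (n + 1)
  have hv (n : ℕ) : v n ≠ 0 := by positivity
  have hv₀ : Tendsto v atTop (𝓝 0) := tendsto_one_div_add_atTop_nhds_zero_nat
  have hl_mem : l ∈ Icc 0 l := right_mem_Icc.2 hl
  have regularized :
      Tendsto (fun n ↦ ((∫ x, Real.exp (l * x - v n * x ^ 2 / 2) ∂μ : ℝ) : ℂ)) atTop
        (𝓝 (f l)) := by
    simp_rw [integral_exp_mul_sub_mul_sq_of_charFun_eq (hv _) hl hf hf' hfA hμ]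
    simpa [Function.comp_def] using (tendsto_integral_gaussianReal
      (continuous_vertical_line hl_mem hf) (fun t ↦ hfA _ (by simpa using hl_mem)) 0).comp hv₀
  have pointwise (x : ℝ) :
      Tendsto (fun n ↦ Real.exp (l * x - v n * x ^ 2 / 2)) atTop (𝓝 (Real.exp (l * x))) := by
    have : Continuous fun v : ℝ≥0 ↦ Real.exp (l * x - v * x ^ 2 / 2) := by fun_prop
    exact (this.tendsto' 0 _ (by simp)).comp hv₀
  have integrable_limit : Integrable (fun x ↦ Real.exp (l * x)) μ :=
    integrable_of_tendsto_integral_of_nonneg (fun n ↦ integrable_exp_mul_sub_mul_sq (hv n))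
      (fun n x ↦ (Real.exp_pos _).le) pointwise ((Complex.continuous_re.tendsto _).comp regularized)
  have dominated (n : ℕ) (x : ℝ) : ‖Real.exp (l * x - v n * x ^ 2 / 2)‖ ≤ Real.exp (l * x) := by
    rw [Real.norm_of_nonneg (Real.exp_pos _).le, Real.exp_le_exp]
    exact sub_le_self _ (by positivity)
  refine ⟨integrable_limit, tendsto_nhds_unique ?_ regularized⟩
  exact (Complex.continuous_ofReal.tendsto _).comp <| tendsto_integral_of_dominated_convergence _
    (fun n ↦ by fun_prop) integrable_limit (fun n ↦ .of_forall (dominated n))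
    (.of_forall pointwise)

end Extension

section Stable

variable {l K Y : ℝ} {z : ℂ}

lemma ofReal_mul_I_cpow_ofReal (hY : Y ≠ 0) (t : ℝ) :
    (t * I) ^ (Y : ℂ) = ((|t| ^ Y : ℝ) : ℂ) *
      (Real.cos (Real.pi * Y / 2) + I * Real.sign t * Real.sin (Real.pi * Y / 2)) := by
  have hY' : Real.pi * Y / 2 = Real.pi / 2 * Y := by ring
  rcases lt_trichotomy t 0 with ht | rfl | ht
  · have harg : (t * I).arg = -(Real.pi / 2) := by simp [Complex.arg_eq_neg_pi_div_two_iff, ht]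
    rw [Complex.cpow_ofReal, harg, hY', Real.sign_of_neg ht, neg_mul, Real.cos_neg, Real.sin_neg]
    simp [mul_comm I]
  · simp [hY]
  · have harg : (t * I).arg = Real.pi / 2 := by simp [Complex.arg_eq_pi_div_two_iff, ht]
    rw [Complex.cpow_ofReal, harg, hY', Real.sign_of_pos ht]
    simp [mul_comm I]

lemma re_cpow_nonneg (hY : Y ∈ Icc 0 1) (hz : 0 ≤ z.re) : 0 ≤ (z ^ (Y : ℂ)).re := by
  have harg : |z.arg * Y| ≤ Real.pi / 2 := by
    rw [abs_mul, abs_of_nonneg hY.1]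
    exact (mul_le_of_le_one_right (abs_nonneg _) hY.2).trans
      (Complex.abs_arg_le_pi_div_two_iff.2 hz)
  rw [Complex.cpow_ofReal_re]
  exact mul_nonneg (by positivity) (Real.cos_nonneg_of_mem_Icc (abs_le.1 harg))

/- If `|arg z| * Y` exceeds `π / 2`, then `z ^ Y` lies in the left half-plane; otherwise `‖z‖` is
controlled by `z.re`. -/
lemma re_cpow_le (hY : Y ∈ Ioc 1 3) (hz : z ∈ re ⁻¹' Icc 0 l) :
    (z ^ (Y : ℂ)).re ≤ (l / Real.cos (Real.pi / (2 * Y))) ^ Y := by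
  have hY₀ : 0 < Y := one_pos.trans hY.1
  have hpi := Real.pi_pos
  have hangle : Real.pi / (2 * Y) < Real.pi / 2 :=
    div_lt_div_of_pos_left hpi two_pos (by linarith [hY.1])
  have hcos : 0 < Real.cos (Real.pi / (2 * Y)) :=
    Real.cos_pos_of_mem_Ioo ⟨by linarith [show 0 < Real.pi / (2 * Y) by positivity], hangle⟩
  have hl : 0 ≤ l := hz.1.trans hz.2
  have harg : |z.arg| ≤ Real.pi / 2 := Complex.abs_arg_le_pi_div_two_iff.2 hz.1
  rw [Complex.cpow_ofReal_re]
  rcases le_or_gt |z.arg| (Real.pi / (2 * Y)) with hsmall | hlarge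
  · have hnorm : ‖z‖ ≤ l / Real.cos (Real.pi / (2 * Y)) := by
      rw [le_div_iff₀ hcos]
      calc ‖z‖ * Real.cos (Real.pi / (2 * Y)) ≤ ‖z‖ * Real.cos |z.arg| := by
            gcongr
            exact Real.cos_le_cos_of_nonneg_of_le_pi (abs_nonneg _) (by linarith) hsmall
        _ = z.re := by rw [Real.cos_abs, Complex.norm_mul_cos_arg]
        _ ≤ l := hz.2
    calc ‖z‖ ^ Y * Real.cos (z.arg * Y) ≤ ‖z‖ ^ Y :=
          mul_le_of_le_one_right (by positivity) (Real.cos_le_one _)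
      _ ≤ (l / Real.cos (Real.pi / (2 * Y))) ^ Y := by gcongr
  · have hneg : Real.cos (z.arg * Y) ≤ 0 := by
      rw [← Real.cos_abs, abs_mul, abs_of_pos hY₀]
      refine Real.cos_nonpos_of_pi_div_two_le_of_le ?_ (by nlinarith [hY.2])
      rw [div_lt_iff₀ (by positivity)] at hlarge
      linarith
    exact (mul_nonpos_of_nonneg_of_nonpos (by positivity) hneg).trans (by positivity)

lemma gamma_neg_of_mem_Ioo_neg_one_zero {x : ℝ} (hx : x ∈ Ioo (-1) 0) : Real.Gamma x < 0 := by
  have hpos : 0 < Real.Gamma (x + 1) := Real.Gamma_pos_of_pos (by linarith [hx.1])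
  rw [Real.Gamma_add_one hx.2.ne] at hpos
  exact neg_of_mul_pos_right hpos hx.2.le

lemma gamma_pos_of_mem_Ioo_neg_two_neg_one {x : ℝ} (hx : x ∈ Ioo (-2) (-1)) : 0 < Real.Gamma x := by
  have hneg : Real.Gamma (x + 1) < 0 :=
    gamma_neg_of_mem_Ioo_neg_one_zero ⟨by linarith [hx.1], by linarith [hx.2]⟩
  have hx₀ : x < 0 := by linarith [hx.2]
  rw [Real.Gamma_add_one hx₀.ne] at hneg
  exact pos_of_mul_neg_right hneg hx₀.le

lemma exists_gamma_mul_re_cpow_le (hY : Y ∈ Ioo 0 2) (hY₁ : Y ≠ 1) (l : ℝ) :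
    ∃ A, ∀ z ∈ re ⁻¹' Icc 0 l, Real.Gamma (-Y) * (z ^ (Y : ℂ)).re ≤ A := by
  rcases hY₁.lt_or_gt with hlt | hgt
  · have hΓ : Real.Gamma (-Y) < 0 :=
      gamma_neg_of_mem_Ioo_neg_one_zero ⟨by linarith, by linarith [hY.1]⟩
    exact ⟨0, fun z hz ↦
      mul_nonpos_of_nonpos_of_nonneg hΓ.le (re_cpow_nonneg ⟨hY.1.le, hlt.le⟩ hz.1)⟩
  · have hΓ : 0 < Real.Gamma (-Y) :=
      gamma_pos_of_mem_Ioo_neg_two_neg_one ⟨by linarith [hY.2], by linarith⟩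
    exact ⟨_, fun z hz ↦
      mul_le_mul_of_nonneg_left (re_cpow_le ⟨hgt, by linarith [hY.2]⟩ hz) hΓ.le⟩

theorem mgf_eq_exp_rpow_of_charFun_eq {μ : Measure ℝ} [IsFiniteMeasure μ] {A : ℝ} (hl : 0 ≤ l)
    (hY : 0 < Y) (hA : ∀ z ∈ re ⁻¹' Icc 0 l, K * (z ^ (Y : ℂ)).re ≤ A)
    (hμ : ∀ t : ℝ, charFun μ t = cexp (K * (t * I) ^ (Y : ℂ))) :
    l ∈ integrableExpSet id μ ∧ mgf id μ l = Real.exp (K * l ^ Y) := by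
  have cont : ContinuousOn (fun z : ℂ ↦ cexp (K * z ^ (Y : ℂ))) (re ⁻¹' Icc 0 l) := fun z hz ↦
    ((Complex.continuousAt_cpow_const_of_re_pos (Or.inl hz.1)
      (by simpa using hY)).const_mul _).cexp.continuousWithinAt
  have diff : DifferentiableOn ℂ (fun z : ℂ ↦ cexp (K * z ^ (Y : ℂ))) (re ⁻¹' Ioo 0 l) :=
    fun z hz ↦ ((differentiableAt_id.cpow_const
      (Or.inl hz.1)).const_mul _).cexp.differentiableWithinAt
  have bound (z : ℂ) (hz : z ∈ re ⁻¹' Icc 0 l) : ‖cexp (K * z ^ (Y : ℂ))‖ ≤ Real.exp A := by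
    rw [Complex.norm_exp, Complex.re_ofReal_mul, Real.exp_le_exp]
    exact hA z hz
  obtain ⟨integrable, value⟩ := mgf_eq_of_charFun_eq hl cont diff bound hμ
  refine ⟨integrable, Complex.ofReal_injective ?_⟩
  rw [value, Complex.ofReal_exp, Complex.ofReal_mul, Complex.ofReal_cpow hl]

end Stable

theorem stmt17_general
    {Ω : Type*} [MeasurableSpace Ω] (P : Measure Ω) [IsFiniteMeasure P]
    (Y C : ℝ) (hY : Y ∈ Set.Ioo (0 : ℝ) 2) (hY₁ : Y ≠ 1) (hC : 0 ≤ C)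
    (U : Ω → ℝ) (hU : AEMeasurable U P)
    (hUchar : ∀ u : ℝ, (∫ ω, Complex.exp (Complex.I * u * (U ω)) ∂P) =
      Complex.exp (((C * Real.Gamma (-Y) * |u| ^ Y : ℝ) : ℂ) *
        (((Real.cos (Real.pi * Y / 2) : ℝ) : ℂ)
          - Complex.I * ((Real.sign u : ℝ) : ℂ) * ((Real.sin (Real.pi * Y / 2) : ℝ) : ℂ)))) :
    ∀ lam ≥ (0 : ℝ), Integrable (fun ω ↦ Real.exp (-(lam * U ω))) P ∧
      (∫ ω, Real.exp (-(lam * U ω)) ∂P) = Real.exp (C * Real.Gamma (-Y) * lam ^ Y) := by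
  intro lam hlam
  have charFun_neg (t : ℝ) : charFun (P.map (-U)) t =
      cexp ((C * Real.Gamma (-Y) : ℝ) * (t * I) ^ (Y : ℂ)) := by
    rw [charFun_apply_real, integral_map hU.neg (by fun_prop), ofReal_mul_I_cpow_ofReal hY.1.ne',
      ← mul_assoc, ← Complex.ofReal_mul]
    simpa [Real.sign_neg, mul_comm, mul_left_comm] using hUchar (-t)
  obtain ⟨A, hA⟩ := exists_gamma_mul_re_cpow_le hY hY₁ lam
  obtain ⟨integrable, value⟩ := mgf_eq_exp_rpow_of_charFun_eq (A := C * A) hlam hY.1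
    (fun z hz ↦ by simpa only [mul_assoc] using mul_le_mul_of_nonneg_left (hA z hz) hC) charFun_neg
  rw [mgf_id_map hU.neg] at value
  constructor
  · simpa [Function.comp_def] using
      (integrable_of_mem_integrableExpSet integrable).comp_aemeasurable hU.neg
  · simpa [mgf] using value

/-- Laplace transform of the centered one-sided `Y`-stable law:
for every `λ ≥ 0`, `E[e^(−λ·U)] = exp(C·Γ(−Y)·λ^Y)`. -/
theorem stmt17
    {Ω : Type} [MeasurableSpace Ω] (P : Measure Ω) [IsProbabilityMeasure P]
    (Y C : ℝ) (hY : Y ∈ Set.Ioo (1:ℝ) 2) (hC : 0 < C)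
    (U : Ω → ℝ) (hU : Measurable U)
    (hUchar : ∀ u : ℝ, (∫ ω, Complex.exp (Complex.I * u * (U ω)) ∂P) =
      Complex.exp (((C * Real.Gamma (-Y) * |u| ^ Y : ℝ) : ℂ) *
        (((Real.cos (Real.pi * Y / 2) : ℝ) : ℂ)
          - Complex.I * ((Real.sign u : ℝ) : ℂ) * ((Real.sin (Real.pi * Y / 2) : ℝ) : ℂ)))) :
    ∀ lam ≥ (0:ℝ),
      (∫ ω, Real.exp (-(lam * U ω)) ∂P) = Real.exp (C * Real.Gamma (-Y) * lam ^ Y) :=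
  fun lam hlam ↦ (stmt17_general P Y C ⟨one_pos.trans hY.1, hY.2⟩ hY.1.ne' hC.le U hU.aemeasurable
    hUchar lam hlam).2
end
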